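/- Let δ21 = X² + 2X + 2, δ22 = X² + 2, δ23 = X² − 2X + 2, δ41 = X⁴ + 2X³ + 2X² + 4X + 4, δ42 = X⁴ + 2X² + 4, δ81 = X⁸ + 4X⁷ + 6X⁶ + 4X⁵ + 2X⁴ + 8X³ + 24X² + 32X + 16, δ82 = X⁸ + 2X⁶ + 4X⁵ + 2X⁴ + 8X³ + 8X² + 16, δ83 = X⁸ + 2X⁷ + 2X⁶ − 4X⁴ + 8X² + 16X + 16, and δ84 = X⁸ + 2X⁶ − 4X⁵ + 2X⁴ − 8X³ + 8X² + 16. Then for every n ≥ 5: F_2(n,0,0,0,0,0) = 2^{n−5} − (1/32)·(7ρ_n(δ21) + 4ρ_n(δ22) + 2ρ_n(δ23) + 5ρ_n(δ41) + 3ρ_n(δ42) + 2ρ_n(δ81) + ρ_n(δ82) + ρ_n(δ83) + ρ_n(δ84)); F_2(n,0,0,0,1,0) = 2^{n−5} − (1/32)·(3ρ_n(δ21) + 2ρ_n(δ23) + ρ_n(δ41) − ρ_n(δ42) − 2ρ_n(δ81) − ρ_n(δ82) + ρ_n(δ83) − ρ_n(δ84)); F_2(n,0,0,0,0,1) = 2^{n−5}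 − (1/32)·(ρ_n(δ21) + 2ρ_n(δ22) − 2ρ_n(δ23) − 3ρ_n(δ41) − 3ρ_n(δ42) + ρ_n(δ82) − ρ_n(δ83) − ρ_n(δ84)); and F_2(n,0,0,0,1,1) = 2^{n−5} − (1/32)·(−3ρ_n(δ21) − 2ρ_n(δ22) − 2ρ_n(δ23) + ρ_n(δ41) + ρ_n(δ42) − ρ_n(δ82) − ρ_n(δ83) + ρ_n(δ84)). All equalities are between complex numbers, the counts being viewed in ℂ. -/

import Mathlib

open Polynomial

/-- For a finite field `K` with `2^n` elements, the `k`-th trace function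
`T_k(a) = Σ_S ∏_{i ∈ S} a^(2^i)`, the sum over all `k`-element subsets `S` of `{0,…,n-1}`. -/
noncomputable def traceFn (q n k : ℕ) {K : Type*} [CommRing K] (a : K) : K :=
  ∑ S ∈ Finset.powersetCard k (Finset.range n), ∏ i ∈ S, a ^ (q ^ i)

/-- `ρ_n(γ)`: the sum of the `n`-th powers of the complex roots of `γ ∈ ℤ[X]`,
counted with multiplicity. -/
noncomputable def rho (n : ℕ) (γ : Polynomial ℤ) : ℂ :=
  ((γ.map (Int.castRingHom ℂ)).roots.map (· ^ n)).sum

/-- `F_2(n,t₁,t₂,t₃,t₄,t₅)`: the number of `a` in the field `K` (of `2^n` elements)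
with `T_k(a) = t_k` for `k = 1,…,5`. -/
noncomputable def cnt5 (n : ℕ) (K : Type) [Field K] [Fintype K] (t1 t2 t3 t4 t5 : K) : ℕ :=
  Nat.card {a : K // traceFn 2 n 1 a = t1 ∧ traceFn 2 n 2 a = t2 ∧
    traceFn 2 n 3 a = t3 ∧ traceFn 2 n 4 a = t4 ∧ traceFn 2 n 5 a = t5}

noncomputable def d21 : Polynomial ℤ := X ^ 2 + 2 * X + 2
noncomputable def d22 : Polynomial ℤ := X ^ 2 + 2
noncomputable def d23 : Polynomial ℤ := X ^ 2 - 2 * X + 2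
noncomputable def d41 : Polynomial ℤ := X ^ 4 + 2 * X ^ 3 + 2 * X ^ 2 + 4 * X + 4
noncomputable def d42 : Polynomial ℤ := X ^ 4 + 2 * X ^ 2 + 4
noncomputable def d81 : Polynomial ℤ :=
  X ^ 8 + 4 * X ^ 7 + 6 * X ^ 6 + 4 * X ^ 5 + 2 * X ^ 4 + 8 * X ^ 3 + 24 * X ^ 2 + 32 * X + 16
noncomputable def d82 : Polynomial ℤ :=
  X ^ 8 + 2 * X ^ 6 + 4 * X ^ 5 + 2 * X ^ 4 + 8 * X ^ 3 + 8 * X ^ 2 + 16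
noncomputable def d83 : Polynomial ℤ :=
  X ^ 8 + 2 * X ^ 7 + 2 * X ^ 6 - 4 * X ^ 4 + 8 * X ^ 2 + 16 * X + 16
noncomputable def d84 : Polynomial ℤ :=
  X ^ 8 + 2 * X ^ 6 - 4 * X ^ 5 + 2 * X ^ 4 - 8 * X ^ 3 + 8 * X ^ 2 + 16


/-- monic polynomials of degree `m` over `F_2`. -/
noncomputable def monics : ℕ → Finset (ZMod 2)[X]
  | 0 => {1}
  | m + 1 => by
    classical
    exact (monics m ×ˢ (Finset.univ : Finset (ZMod 2))).image (fun x => X * x.1 + C x.2)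

lemma X_mul_add_C_inj : Function.Injective
    (fun x : (ZMod 2)[X] × ZMod 2 => X * x.1 + C x.2) := by
  rintro ⟨f, b⟩ ⟨g, c⟩ h
  simp only at h
  have h0 : b = c := by
    have := congrArg (fun p => coeff p 0) h
    simpa using this
  subst h0
  have := mul_left_cancel₀ X_ne_zero (add_right_cancel h)
  simp [this]

lemma sum_monics_succ (m : ℕ) (φ : (ZMod 2)[X] → ℂ) :
    ∑ f ∈ monics (m + 1), φ f = ∑ f ∈ monics m, ∑ b : ZMod 2, φ (X * f + C b) := by
  classical
  rw [monics, Finset.sum_image (fun x _ y _ h => X_mul_add_C_inj h), Finset.sum_product]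

lemma mem_monics (m : ℕ) (f : (ZMod 2)[X]) :
    f ∈ monics m ↔ f.Monic ∧ f.natDegree = m := by
  classical
  induction m generalizing f with
  | zero =>
    simp only [monics, Finset.mem_singleton]
    constructor
    · rintro rfl; simp
    · rintro ⟨h, h'⟩; exact h.natDegree_eq_zero.mp h'
  | succ m ih =>
    simp only [monics, Finset.mem_image, Finset.mem_product, Finset.mem_univ, and_true, Prod.exists]
    constructor
    · rintro ⟨g, b, hg, rfl⟩
      obtain ⟨h1, h2⟩ := (ih g).1 hg
      have hX : (X * g).Monic := monic_X.mul h1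
      have hd : (X * g).natDegree = m + 1 := by
        rw [monic_X.natDegree_mul h1, natDegree_X, h2, add_comm]
      refine ⟨hX.add_of_left ?_, ?_⟩
      · rw [degree_eq_natDegree hX.ne_zero, hd]
        exact lt_of_le_of_lt degree_C_le (by exact_mod_cast Nat.succ_pos m)
      · rw [natDegree_add_C, hd]
    · rintro ⟨h1, h2⟩
      refine ⟨divX f, f.coeff 0, (ih _).2 ⟨?_, ?_⟩, ?_⟩
      · rw [Monic, leadingCoeff, natDegree_divX_eq_natDegree_tsub_one, coeff_divX, h2]
        simpa [Monic, leadingCoeff, h2] using h1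
      · rw [natDegree_divX_eq_natDegree_tsub_one, h2]; rfl
      · rw [mul_comm]; exact divX_mul_X_add f

/-- monic irreducible polynomials of degree in `[1,N]`. -/
noncomputable def irrs (N : ℕ) : Finset (ZMod 2)[X] := by
  classical
  exact ((Finset.range (N + 1)).biUnion monics).filter Irreducible

lemma mem_irrs (N : ℕ) (P : (ZMod 2)[X]) :
    P ∈ irrs N ↔ P.Monic ∧ Irreducible P ∧ P.natDegree ≤ N := by
  classical
  simp only [irrs, Finset.mem_filter, Finset.mem_biUnion, Finset.mem_range, mem_monics]
  constructor
  · rintro ⟨⟨k, hk, h1, h2⟩, h3⟩; exact ⟨h1, h3, by omega⟩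
  · rintro ⟨h1, h2, h3⟩; exact ⟨⟨_, by omega, h1, rfl⟩, h2⟩

open UniqueFactorizationMonoid in
open Classical in
lemma natDegree_eq_sum (N : ℕ) (f : (ZMod 2)[X]) (hf : f.Monic) (hN : f.natDegree = N) :
    (N : ℂ) = ∑ P ∈ irrs N, ∑ j ∈ Finset.Icc 1 N, if P ^ j ∣ f then (P.natDegree : ℂ) else 0 := by
  have h0 : f ≠ 0 := hf.ne_zero
  have hmon : ∀ P ∈ normalizedFactors f, P.Monic := fun P hP => by
    have h1 := normalize_normalized_factor P hP
    rw [← h1]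
    exact monic_normalize (irreducible_of_normalized_factor P hP).ne_zero
  have hmon' : (normalizedFactors f).prod.Monic := by
    have := monic_multiset_prod_of_monic (normalizedFactors f) id (by simpa using hmon)
    simpa using this
  have hprod : (normalizedFactors f).prod = f :=
    eq_of_monic_of_associated hmon' hf (prod_normalizedFactors h0)
  have hdeg : ((normalizedFactors f).map natDegree).sum = N := by
    have := natDegree_multiset_prod_of_monic (normalizedFactors f) hmon
    rw [hprod, hN] at this
    exact this.symm
  have hsub : (normalizedFactors f).toFinset ⊆ irrs N := by
    intro P hP
    rw [Multiset.mem_toFinset] at hP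
    rw [mem_irrs]
    refine ⟨hmon P hP, irreducible_of_normalized_factor P hP, ?_⟩
    rw [← hN]
    exact natDegree_le_of_dvd (dvd_of_mem_normalizedFactors hP) h0
  have e1 : (N : ℂ) = ∑ P ∈ (normalizedFactors f).toFinset,
      ((Multiset.count P (normalizedFactors f) • P.natDegree : ℕ) : ℂ) := by
    rw [← Nat.cast_sum, ← Finset.sum_multiset_map_count, hdeg]
  rw [e1, Finset.sum_subset hsub]
  · refine Finset.sum_congr rfl fun P hP => ?_
    obtain ⟨hm, hi, hd⟩ := (mem_irrs N P).1 hP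
    have hc : ∀ j, P ^ j ∣ f ↔ j ≤ Multiset.count P (normalizedFactors f) := by
      intro j
      rw [pow_dvd_iff_le_emultiplicity, emultiplicity_eq_count_normalizedFactors hi h0,
        hm.normalize_eq_self]
      exact Nat.cast_le
    have hle : Multiset.count P (normalizedFactors f) ≤ N := by
      have h1 := (hc _).2 le_rfl
      have h2 := natDegree_le_of_dvd h1 h0
      rw [hm.natDegree_pow, hN] at h2
      have h3 := hi.natDegree_pos
      nlinarith
    simp only [hc]
    rw [← Finset.sum_filter, Finset.sum_const]
    have : Finset.filter (fun j => j ≤ Multiset.count P (normalizedFactors f)) (Finset.Icc 1 N)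
        = Finset.Icc 1 (Multiset.count P (normalizedFactors f)) := by
      ext j; simp only [Finset.mem_filter, Finset.mem_Icc]; omega
    rw [this, Nat.card_Icc]
    simp
  · intro P _ hP
    rw [Multiset.mem_toFinset] at hP
    simp [Multiset.count_eq_zero_of_notMem hP]

noncomputable def Lsum (χ : (ZMod 2)[X] → ℂ) (m : ℕ) : ℂ := ∑ f ∈ monics m, χ f

noncomputable def Ssum (χ : (ZMod 2)[X] → ℂ) (k : ℕ) : ℂ :=
  ∑ P ∈ irrs k, ∑ j ∈ Finset.Icc 1 k,
    if j * P.natDegree = k then (P.natDegree : ℂ) * χ P ^ j else 0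

lemma Ssum_eq (χ : (ZMod 2)[X] → ℂ) (k N : ℕ) (h : k ≤ N) : Ssum χ k =
    ∑ P ∈ irrs N, ∑ j ∈ Finset.Icc 1 N,
      if j * P.natDegree = k then (P.natDegree : ℂ) * χ P ^ j else 0 := by
  rw [Ssum]
  have hsub : irrs k ⊆ irrs N := by
    intro P hP
    rw [mem_irrs] at hP ⊢
    exact ⟨hP.1, hP.2.1, hP.2.2.trans h⟩
  rw [← Finset.sum_subset hsub]
  · refine Finset.sum_congr rfl fun P hP => ?_
    obtain ⟨hm, hi, hd⟩ := (mem_irrs k P).1 hP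
    apply Finset.sum_subset (Finset.Icc_subset_Icc le_rfl h)
    intro j hj hj'
    simp only [Finset.mem_Icc] at hj hj'
    rw [if_neg]
    have h3 := hi.natDegree_pos
    intro h4
    apply hj'
    refine ⟨hj.1, ?_⟩
    nlinarith
  · intro P hP hP'
    apply Finset.sum_eq_zero
    intro j hj
    simp only [Finset.mem_Icc] at hj
    rw [if_neg]
    intro h4
    apply hP'
    rw [mem_irrs] at hP ⊢
    refine ⟨hP.1, hP.2.1, ?_⟩
    nlinarith

open Classical in
lemma sum_dvd (χ : (ZMod 2)[X] → ℂ)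
    (hmul : ∀ f g : (ZMod 2)[X], f.Monic → g.Monic → χ (f * g) = χ f * χ g)
    (Q : (ZMod 2)[X]) (hQ : Q.Monic) (n : ℕ) :
    (∑ f ∈ monics n, if Q ∣ f then χ f else 0) =
      if Q.natDegree ≤ n then χ Q * Lsum χ (n - Q.natDegree) else 0 := by
  rw [← Finset.sum_filter]
  split_ifs with h
  · rw [Lsum, Finset.mul_sum]
    symm
    apply Finset.sum_bij (fun g _ => Q * g)
    · intro g hg
      rw [mem_monics] at hg
      rw [Finset.mem_filter, mem_monics, hQ.natDegree_mul hg.1]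
      exact ⟨⟨hQ.mul hg.1, by omega⟩, dvd_mul_right _ _⟩
    · intro a _ b _ hab
      exact mul_left_cancel₀ hQ.ne_zero hab
    · intro f hf
      rw [Finset.mem_filter, mem_monics] at hf
      obtain ⟨⟨h1, h2⟩, g, rfl⟩ := hf
      have hg : g.Monic := hQ.of_mul_monic_left h1
      rw [hQ.natDegree_mul hg] at h2
      exact ⟨g, (mem_monics _ _).2 ⟨hg, by omega⟩, rfl⟩
    · intro g hg
      rw [mem_monics] at hg
      exact (hmul _ _ hQ hg.1).symm
  · rw [Finset.filter_false_of_mem, Finset.sum_empty]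
    intro f hf hd
    rw [mem_monics] at hf
    have := natDegree_le_of_dvd hd hf.1.ne_zero
    omega

lemma chi_pow (χ : (ZMod 2)[X] → ℂ) (h1 : χ 1 = 1)
    (hmul : ∀ f g : (ZMod 2)[X], f.Monic → g.Monic → χ (f * g) = χ f * χ g)
    (P : (ZMod 2)[X]) (hP : P.Monic) (j : ℕ) : χ (P ^ j) = χ P ^ j := by
  induction j with
  | zero => simp [h1]
  | succ j ih => rw [pow_succ, hmul _ _ (hP.pow j) hP, ih, pow_succ]

lemma euler_identity (χ : (ZMod 2)[X] → ℂ) (h1 : χ 1 = 1)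
    (hmul : ∀ f g : (ZMod 2)[X], f.Monic → g.Monic → χ (f * g) = χ f * χ g) (n : ℕ) :
    (n : ℂ) * Lsum χ n = ∑ k ∈ Finset.Icc 1 n, Ssum χ k * Lsum χ (n - k) := by
  classical
  have e1 : (n : ℂ) * Lsum χ n = ∑ P ∈ irrs n, ∑ j ∈ Finset.Icc 1 n,
      if j * P.natDegree ≤ n then
        (P.natDegree : ℂ) * χ P ^ j * Lsum χ (n - j * P.natDegree) else 0 := by
    calc (n : ℂ) * Lsum χ n
        = ∑ f ∈ monics n, ∑ P ∈ irrs n, ∑ j ∈ Finset.Icc 1 n,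
            (P.natDegree : ℂ) * (if P ^ j ∣ f then χ f else 0) := by
          rw [Lsum, Finset.mul_sum]
          refine Finset.sum_congr rfl fun f hf => ?_
          rw [mem_monics] at hf
          rw [natDegree_eq_sum n f hf.1 hf.2, Finset.sum_mul]
          refine Finset.sum_congr rfl fun P _ => ?_
          rw [Finset.sum_mul]
          refine Finset.sum_congr rfl fun j _ => ?_
          split_ifs <;> simp
      _ = _ := by
          rw [Finset.sum_comm]
          refine Finset.sum_congr rfl fun P hP => ?_
          rw [Finset.sum_comm]
          refine Finset.sum_congr rfl fun j _ => ?_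
          have hm := ((mem_irrs _ _).1 hP).1
          rw [← Finset.mul_sum, sum_dvd χ hmul _ (hm.pow j), hm.natDegree_pow,
            chi_pow χ h1 hmul P hm]
          split_ifs <;> ring
  have e2 : ∀ k ∈ Finset.Icc 1 n, Ssum χ k * Lsum χ (n - k) =
      ∑ P ∈ irrs n, ∑ j ∈ Finset.Icc 1 n,
      if j * P.natDegree = k then (P.natDegree : ℂ) * χ P ^ j * Lsum χ (n - k) else 0 := by
    intro k hk
    rw [Finset.mem_Icc] at hk
    rw [Ssum_eq χ k n hk.2, Finset.sum_mul]
    refine Finset.sum_congr rfl fun P _ => ?_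
    rw [Finset.sum_mul]
    refine Finset.sum_congr rfl fun j _ => ?_
    split_ifs <;> ring
  rw [e1, Finset.sum_congr rfl e2]
  refine Eq.trans ?_ Finset.sum_comm
  refine Finset.sum_congr rfl fun P hP => ?_
  refine Eq.trans ?_ Finset.sum_comm
  refine Finset.sum_congr rfl fun j hj => ?_
  rw [Finset.sum_ite_eq (Finset.Icc 1 n) (j * P.natDegree)]
  have h3 := ((mem_irrs _ _).1 hP).2.1.natDegree_pos
  rw [Finset.mem_Icc] at hj
  have : 1 ≤ j * P.natDegree := Nat.mul_pos hj.1 h3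
  simp [Finset.mem_Icc, this]

section field
variable {K : Type} [Field K] [Fintype K] [Algebra (ZMod 2) K]

lemma charP2 : CharP K 2 := charP_of_injective_algebraMap (algebraMap (ZMod 2) K).injective 2

lemma root_pow_iff (a : K) (e : ℕ) :
    a ^ (2 ^ e) = a ↔ (minpoly (ZMod 2) a).natDegree ∣ e := by
  have hIntg : IsIntegral (ZMod 2) a := Algebra.IsIntegral.isIntegral a
  rw [(minpoly.irreducible hIntg).natDegree_dvd_iff_dvd_X_pow_card_pow_sub_X, minpoly.dvd_iff]
  simp [sub_eq_zero]

lemma minpoly_root_pow (a : K) (i : ℕ) :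
    aeval (a ^ (2 ^ i)) (minpoly (ZMod 2) a) = 0 := by
  have := charP2 (K := K)
  have h := minpoly.aeval (ZMod 2) a
  induction i with
  | zero => simp
  | succ i ih =>
    rw [pow_succ, pow_mul]
    have := ZMod.expand_card (p := 2) (minpoly (ZMod 2) a)
    rw [← expand_aeval, this, map_pow, ih]
    simp

lemma frob_prod_base (a : K) :
    ∏ i ∈ Finset.range (minpoly (ZMod 2) a).natDegree, (X - C (a ^ (2 ^ i)))
      = (minpoly (ZMod 2) a).map (algebraMap (ZMod 2) K) := by
  have := charP2 (K := K)
  have hIntg : IsIntegral (ZMod 2) a := Algebra.IsIntegral.isIntegral a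
  have hm := minpoly.monic hIntg
  symm
  apply eq_of_monic_of_dvd_of_natDegree_le
  · exact monic_prod_X_sub_C _ _
  · exact hm.map _
  · apply Finset.prod_dvd_of_coprime
    · have key : ∀ i j, i < j → j < (minpoly (ZMod 2) a).natDegree →
          a ^ (2 ^ i) ≠ a ^ (2 ^ j) := by
        intro i j hij hj h
        obtain ⟨e, rfl⟩ := Nat.exists_eq_add_of_lt hij
        have h2 : (a ^ (2 ^ (e + 1))) ^ 2 ^ i = a ^ 2 ^ i := by
          rw [h, ← pow_mul, ← pow_add]; congr 2; ring
        have h3 := iterateFrobenius_inj K 2 i (by simpa [iterateFrobenius_def] using h2)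
        rw [root_pow_iff] at h3
        have := Nat.le_of_dvd (by omega) h3
        omega
      intro i hi j hj hij
      simp only [Finset.coe_range, Set.mem_Iio] at hi hj
      apply isCoprime_X_sub_C_of_isUnit_sub
      rw [isUnit_iff_ne_zero, sub_ne_zero]
      rcases lt_or_gt_of_ne hij with h | h
      · exact key i j h hj
      · exact (key j i h hi).symm
    · intro i _
      rw [dvd_iff_isRoot, IsRoot, eval_map_algebraMap]
      exact minpoly_root_pow a i
  · rw [hm.natDegree_map, natDegree_prod_of_monic _ _ (fun i _ => monic_X_sub_C _)]
    simp only [natDegree_X_sub_C, Finset.sum_const, Finset.card_range, smul_eq_mul, mul_one, le_refl]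

lemma frob_prod (a : K) (m : ℕ) :
    ∏ i ∈ Finset.range ((minpoly (ZMod 2) a).natDegree * m), (X - C (a ^ (2 ^ i)))
      = ((minpoly (ZMod 2) a) ^ m).map (algebraMap (ZMod 2) K) := by
  induction m with
  | zero => simp
  | succ m ih =>
    rw [Nat.mul_succ, Finset.prod_range_add, ih, pow_succ, Polynomial.map_mul, ← frob_prod_base a]
    congr 1
    refine Finset.prod_congr rfl fun i _ => ?_
    rw [pow_add, pow_mul, (root_pow_iff a _).2 (dvd_mul_right _ _)]

lemma traceFn_eq (n : ℕ) (a : K) (m : ℕ) (hm : (minpoly (ZMod 2) a).natDegree * m = n)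
    (k : ℕ) (hk : k ≤ n) :
    traceFn 2 n k a = algebraMap (ZMod 2) K (((minpoly (ZMod 2) a) ^ m).coeff (n - k)) := by
  have := charP2 (K := K)
  rw [← coeff_map, ← frob_prod, hm]
  have : ∏ i ∈ Finset.range n, (X - C (a ^ (2 ^ i))) = ∏ i ∈ Finset.range n, (X + C (a ^ (2 ^ i))) := by
    refine Finset.prod_congr rfl fun i _ => ?_
    rw [sub_eq_add_neg, ← C_neg, CharTwo.neg_eq]
  rw [this, Finset.prod_X_add_C_coeff _ _ (by simp), traceFn, Finset.card_range, Nat.sub_sub_self hk]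

lemma fiber_card (n : ℕ) (hK : Fintype.card K = 2 ^ n) (P : (ZMod 2)[X])
    (hP : P.Monic) (hi : Irreducible P) (hd : P.natDegree ∣ n) [DecidableEq (ZMod 2)[X]] :
    (Finset.univ.filter (fun a : K => minpoly (ZMod 2) a = P)).card = P.natDegree := by
  have hsep := PerfectField.separable_of_irreducible hi
  have hdvd := (hi.natDegree_dvd_iff_dvd_X_pow_card_pow_sub_X (n := n)).1 hd
  have hsplit : (P.map (algebraMap (ZMod 2) K)).Splits := by
    have h1 := FiniteField.splits_X_pow_card_sub_X 2 (K := K)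
    refine h1.of_dvd ?_ ?_
    · rw [Polynomial.map_sub, Polynomial.map_pow, map_X]
      exact FiniteField.X_pow_card_sub_X_ne_zero K Fintype.one_lt_card
    · rw [hK]
      apply Polynomial.map_dvd
      simpa using hdvd
  rw [← card_rootSet_eq_natDegree hsep hsplit, ← Set.toFinset_card]
  congr 1
  ext a
  simp only [Finset.mem_filter, Finset.mem_univ, true_and, Set.mem_toFinset,
    mem_rootSet_of_ne hi.ne_zero]
  constructor
  · rintro rfl; exact minpoly.aeval _ _
  · intro h; exact (minpoly.eq_of_irreducible_of_monic hi h hP).symm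

lemma minpoly_deg_dvd (n : ℕ) (hK : Fintype.card K = 2 ^ n) (a : K) :
    (minpoly (ZMod 2) a).natDegree ∣ n := by
  rw [← root_pow_iff, ← hK]
  exact FiniteField.pow_card a

lemma sum_field (n : ℕ) (hn : 1 ≤ n) (hK : Fintype.card K = 2 ^ n) (χ : (ZMod 2)[X] → ℂ)
    (h1 : χ 1 = 1)
    (hmul : ∀ f g : (ZMod 2)[X], f.Monic → g.Monic → χ (f * g) = χ f * χ g) :
    ∑ a : K, χ ((minpoly (ZMod 2) a) ^ (n / (minpoly (ZMod 2) a).natDegree)) = Ssum χ n := by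
  classical
  have hIntg : ∀ a : K, IsIntegral (ZMod 2) a := fun a => Algebra.IsIntegral.isIntegral a
  have hmaps : ∀ a ∈ (Finset.univ : Finset K), minpoly (ZMod 2) a ∈ irrs n := by
    intro a _
    rw [mem_irrs]
    exact ⟨minpoly.monic (hIntg a), minpoly.irreducible (hIntg a),
      Nat.le_of_dvd hn (minpoly_deg_dvd n hK a)⟩
  rw [← Finset.sum_fiberwise_of_maps_to hmaps, Ssum]
  refine Finset.sum_congr rfl fun P hP => ?_
  obtain ⟨hm, hi, hd⟩ := (mem_irrs n P).1 hP
  have hpos := hi.natDegree_pos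
  by_cases hdv : P.natDegree ∣ n
  · have e1 : ∀ a ∈ Finset.univ.filter (fun a : K => minpoly (ZMod 2) a = P),
        χ ((minpoly (ZMod 2) a) ^ (n / (minpoly (ZMod 2) a).natDegree))
          = χ P ^ (n / P.natDegree) := by
      intro a ha
      rw [Finset.mem_filter] at ha
      rw [ha.2, chi_pow χ h1 hmul P hm]
    rw [Finset.sum_congr rfl e1, Finset.sum_const, fiber_card n hK P hm hi hdv, nsmul_eq_mul,
      Finset.sum_eq_single (n / P.natDegree)]
    · rw [if_pos (Nat.div_mul_cancel hdv)]
    · intro j _ hj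
      rw [if_neg]
      rintro rfl
      exact hj (Nat.mul_div_cancel _ hpos).symm
    · intro h
      exfalso; apply h
      rw [Finset.mem_Icc]
      exact ⟨Nat.div_pos hd hpos, Nat.div_le_self _ _⟩
  · rw [Finset.filter_false_of_mem, Finset.sum_empty]
    · symm
      apply Finset.sum_eq_zero
      intro j _
      rw [if_neg]
      rintro rfl
      exact hdv (dvd_mul_left _ _)
    · rintro a _ rfl
      exact hdv (minpoly_deg_dvd n hK a)

end field

noncomputable def rhoC (n : ℕ) (p : ℂ[X]) : ℂ := (p.roots.map (· ^ n)).sum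

lemma rhoC_mul (n : ℕ) (p q : ℂ[X]) (hp : p.Monic) (hq : q.Monic) :
    rhoC n (p * q) = rhoC n p + rhoC n q := by
  rw [rhoC, roots_mul (hp.mul hq).ne_zero, Multiset.map_add, Multiset.sum_add]; rfl

lemma rhoC_X_pow (n k : ℕ) (hn : 1 ≤ n) : rhoC n (X ^ k) = 0 := by
  have : n ≠ 0 := by omega
  simp [rhoC, Multiset.map_nsmul, Multiset.sum_nsmul, this]

lemma newton_unique (L S S' : ℕ → ℂ) (h0 : L 0 = 1)
    (h : ∀ n : ℕ, (n : ℂ) * L n = ∑ k ∈ Finset.Icc 1 n, S k * L (n - k))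
    (h' : ∀ n : ℕ, (n : ℂ) * L n = ∑ k ∈ Finset.Icc 1 n, S' k * L (n - k)) (n : ℕ) (hn : 1 ≤ n) :
    S n = S' n := by
  induction n using Nat.strong_induction_on with
  | _ n ih =>
    obtain ⟨m, rfl⟩ : ∃ m, n = m + 1 := ⟨n - 1, by omega⟩
    have e := (h (m + 1)).symm.trans (h' (m + 1))
    rw [Finset.sum_Icc_succ_top (by omega), Finset.sum_Icc_succ_top (by omega)] at e
    simp only [Nat.sub_self, h0, mul_one] at e
    have e2 : ∑ k ∈ Finset.Icc 1 m, S k * L (m + 1 - k) = ∑ k ∈ Finset.Icc 1 m, S' k * L (m + 1 - k) := by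
      refine Finset.sum_congr rfl fun k hk => ?_
      rw [Finset.mem_Icc] at hk
      rw [ih k (by omega) hk.1]
    rw [e2] at e
    exact add_left_cancel e

open PowerSeries in
lemma newton_series (s : Multiset ℂ) :
    (PowerSeries.X : PowerSeries ℂ) * PowerSeries.derivative ℂ
        (((s.map (fun a => Polynomial.X - Polynomial.C a)).prod.reverse : ℂ[X]) : PowerSeries ℂ)
      = - (((s.map (fun a => Polynomial.X - Polynomial.C a)).prod.reverse : ℂ[X]) : PowerSeries ℂ) *
        PowerSeries.mk (fun k => if k = 0 then 0 else (s.map (· ^ k)).sum) := by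
  induction s using Multiset.induction with
  | empty =>
    have : (PowerSeries.mk (fun k : ℕ => if k = 0 then (0:ℂ) else 0)) = 0 := by
      ext k; simp
    have hr : (1 : ℂ[X]).reverse = 1 := by rw [← Polynomial.C_1, reverse_C]
    simp only [Multiset.map_zero, Multiset.prod_zero, Multiset.sum_zero, this, hr]
    simp
  | cons a s ih =>
    set P : PowerSeries ℂ :=
      (((s.map (fun a => Polynomial.X - Polynomial.C a)).prod.reverse : ℂ[X]) : PowerSeries ℂ) with hP
    set Q := PowerSeries.mk (fun k => if k = 0 then (0:ℂ) else (s.map (· ^ k)).sum) with hQ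
    set R := PowerSeries.mk (fun k => if k = 0 then (0:ℂ) else a ^ k) with hR
    have hrev : (Polynomial.X - Polynomial.C a : ℂ[X]).reverse = 1 - Polynomial.C a * Polynomial.X := by
      rw [sub_eq_add_neg, ← Polynomial.C_neg, reverse_add_C, natDegree_X]
      have : (Polynomial.X : ℂ[X]).reverse = 1 := by
        have := reverse_X_mul (1 : ℂ[X])
        rw [mul_one] at this
        rw [this, ← Polynomial.C_1, reverse_C]
      rw [this, Polynomial.C_neg]; ring
    have e1 : (((((a ::ₘ s).map (fun a => Polynomial.X - Polynomial.C a)).prod.reverse : ℂ[X])) :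
        PowerSeries ℂ) = (1 - PowerSeries.C a * PowerSeries.X) * P := by
      rw [Multiset.map_cons, Multiset.prod_cons, reverse_mul_of_domain, hrev, Polynomial.coe_mul]
      simp [hP]
    have e2 : PowerSeries.mk (fun k => if k = 0 then (0:ℂ) else ((a ::ₘ s).map (· ^ k)).sum)
        = R + Q := by
      ext k
      simp only [hR, hQ, PowerSeries.coeff_mk, map_add]
      split_ifs <;> simp
    have e3 : R * (1 - PowerSeries.C a * PowerSeries.X) = PowerSeries.C a * PowerSeries.X := by
      ext k
      rw [mul_sub, mul_one, ← mul_assoc, map_sub]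
      rcases k with _ | k
      · simp [hR]
      · rw [PowerSeries.coeff_succ_mul_X, PowerSeries.coeff_succ_mul_X, mul_comm R, PowerSeries.coeff_C_mul, hR,
          PowerSeries.coeff_mk, PowerSeries.coeff_mk, PowerSeries.coeff_C]
        rcases k with _ | k
        · simp
        · simp [pow_succ]; ring
    rw [e1, e2]
    have e4 : PowerSeries.derivative ℂ ((1 - PowerSeries.C a * PowerSeries.X) * P)
        = (1 - PowerSeries.C a * PowerSeries.X) * PowerSeries.derivative ℂ P - PowerSeries.C a * P := by
      rw [Derivation.leibniz]
      have : PowerSeries.derivative ℂ (1 - PowerSeries.C a * PowerSeries.X : PowerSeries ℂ)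
          = - PowerSeries.C a := by
        rw [map_sub, Derivation.leibniz]
        simp [PowerSeries.derivative_C]
      rw [this]
      simp only [smul_eq_mul]; ring
    rw [e4]
    linear_combination (1 - PowerSeries.C a * PowerSeries.X) * ih + P * e3

lemma newton_roots (p : ℂ[X]) (hp : p.Monic) (n : ℕ) :
    (n : ℂ) * p.reverse.coeff n =
      ∑ k ∈ Finset.Icc 1 n, (- rhoC k p) * p.reverse.coeff (n - k) := by
  have h := newton_series p.roots
  have hs : (p.roots.map (fun a => X - C a)).prod = p :=
    ((IsAlgClosed.splits p).eq_prod_roots_of_monic hp).symm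
  rw [hs] at h
  have h2 := congrArg (PowerSeries.coeff n) h
  rcases n with _ | n
  · simp
  rw [PowerSeries.coeff_succ_X_mul, PowerSeries.coeff_derivative, mul_comm (-_),
    PowerSeries.coeff_mul, Finset.Nat.sum_antidiagonal_eq_sum_range_succ_mk,
    Finset.sum_range_succ'] at h2
  simp only [PowerSeries.coeff_mk, if_true, zero_mul, add_zero, Polynomial.coeff_coe, map_neg] at h2
  rw [mul_comm]
  push_cast
  rw [h2, Finset.range_eq_Ico, Finset.sum_Ico_add' (fun k => (if k = 0 then 0 else
    (p.roots.map (· ^ k)).sum) * -p.reverse.coeff (n + 1 - k)) 0 (n + 1) 1]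
  refine Finset.sum_congr rfl fun k hk => ?_
  rw [Finset.mem_Icc] at hk
  rw [if_neg (by omega), rhoC]
  ring

/-- Index of the class of `1 + c1 X + ... + c5 X^5`. -/
def idx (c1 c2 c3 c4 c5 : ZMod 2) : ℕ :=
  c1.val + 2 * c2.val + 4 * c3.val + 8 * c4.val + 16 * c5.val

/-- Exponent of `1 + X`. -/
def tabA (c1 c2 c3 c4 c5 : ZMod 2) : ℕ :=
  [0, 1, 2, 7, 0, 5, 2, 3, 4, 5, 6, 3, 4, 1, 6, 7, 0, 1, 2, 7, 0, 5, 2, 3, 4, 5, 6, 3, 4, 1, 6,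
    7].getD (idx c1 c2 c3 c4 c5) 0

/-- Exponent of `1 + X^3`. -/
def tabB (c1 c2 c3 c4 c5 : ZMod 2) : ℕ :=
  [0, 0, 0, 1, 1, 1, 1, 0, 0, 0, 0, 1, 1, 1, 1, 0, 0, 0, 0, 1, 1, 1, 1, 0, 0, 0, 0, 1, 1, 1, 1,
    0].getD (idx c1 c2 c3 c4 c5) 0

/-- Exponent of `1 + X^5`. -/
def tabC (c1 c2 c3 c4 c5 : ZMod 2) : ℕ :=
  [0, 0, 0, 0, 0, 1, 1, 0, 0, 1, 0, 1, 0, 0, 1, 1, 1, 1, 1, 1, 1, 0, 0, 1, 1, 0, 1, 0, 1, 1, 0,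
    0].getD (idx c1 c2 c3 c4 c5) 0

set_option maxRecDepth 100000 in
lemma tab_mul : ∀ c1 c2 c3 c4 c5 d1 d2 d3 d4 d5 : ZMod 2,
    tabA (c1 + d1) (c2 + c1 * d1 + d2) (c3 + c2 * d1 + c1 * d2 + d3)
      (c4 + c3 * d1 + c2 * d2 + c1 * d3 + d4) (c5 + c4 * d1 + c3 * d2 + c2 * d3 + c1 * d4 + d5)
      = (tabA c1 c2 c3 c4 c5 + tabA d1 d2 d3 d4 d5) % 8 ∧
    tabB (c1 + d1) (c2 + c1 * d1 + d2) (c3 + c2 * d1 + c1 * d2 + d3)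
      (c4 + c3 * d1 + c2 * d2 + c1 * d3 + d4) (c5 + c4 * d1 + c3 * d2 + c2 * d3 + c1 * d4 + d5)
      = (tabB c1 c2 c3 c4 c5 + tabB d1 d2 d3 d4 d5) % 2 ∧
    tabC (c1 + d1) (c2 + c1 * d1 + d2) (c3 + c2 * d1 + c1 * d2 + d3)
      (c4 + c3 * d1 + c2 * d2 + c1 * d3 + d4) (c5 + c4 * d1 + c3 * d2 + c2 * d3 + c1 * d4 + d5)
      = (tabC c1 c2 c3 c4 c5 + tabC d1 d2 d3 d4 d5) % 2 := by
  decide +kernel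

lemma tab_lt : ∀ c1 c2 c3 c4 c5 : ZMod 2, tabA c1 c2 c3 c4 c5 < 8 ∧ tabB c1 c2 c3 c4 c5 < 2 ∧
    tabC c1 c2 c3 c4 c5 < 2 := by decide +kernel

lemma tab_iff : ∀ c1 c2 c3 c4 c5 s t : ZMod 2,
    (c1 = 0 ∧ c2 = 0 ∧ c3 = 0 ∧ c4 = s ∧ c5 = t) ↔
      (tabA c1 c2 c3 c4 c5 = 4 * s.val ∧ tabB c1 c2 c3 c4 c5 = 0 ∧ tabC c1 c2 c3 c4 c5 = t.val) := by
  decide +kernel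

/-- the character with parameters `θ, ε, δ` on classes. -/
noncomputable def chr (θ ε δ : ℂ) (c1 c2 c3 c4 c5 : ZMod 2) : ℂ :=
  θ ^ tabA c1 c2 c3 c4 c5 * ε ^ tabB c1 c2 c3 c4 c5 * δ ^ tabC c1 c2 c3 c4 c5

/-- the character on polynomials. -/
noncomputable def chi (θ ε δ : ℂ) (f : (ZMod 2)[X]) : ℂ :=
  chr θ ε δ (f.reverse.coeff 1) (f.reverse.coeff 2) (f.reverse.coeff 3) (f.reverse.coeff 4)
    (f.reverse.coeff 5)

lemma reverse_one' : (1 : (ZMod 2)[X]).reverse = 1 := by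
  rw [← Polynomial.C_1, reverse_C]

lemma chr_zero (θ ε δ : ℂ) : chr θ ε δ 0 0 0 0 0 = 1 := by
  simp [chr, tabA, tabB, tabC, idx]

lemma chi_one (θ ε δ : ℂ) : chi θ ε δ 1 = 1 := by
  rw [chi, reverse_one']
  simp only [coeff_one]
  norm_num [chr_zero]

lemma chi_mul (θ ε δ : ℂ) (hθ : θ ^ 8 = 1) (hε : ε ^ 2 = 1) (hδ : δ ^ 2 = 1)
    (f g : (ZMod 2)[X]) (hf : f.Monic) (hg : g.Monic) :
    chi θ ε δ (f * g) = chi θ ε δ f * chi θ ε δ g := by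
  have hf0 : f.reverse.coeff 0 = 1 := by rw [coeff_zero_reverse]; exact hf
  have hg0 : g.reverse.coeff 0 = 1 := by rw [coeff_zero_reverse]; exact hg
  have hpow : ∀ (z : ℂ) (k a : ℕ), z ^ k = 1 → z ^ (a % k) = z ^ a := by
    intro z k a h
    conv_rhs => rw [← Nat.div_add_mod a k, pow_add, pow_mul, h, one_pow, one_mul]
  have e1 : (f.reverse * g.reverse).coeff 1 = f.reverse.coeff 1 + g.reverse.coeff 1 := by
    simp only [coeff_mul, Finset.Nat.sum_antidiagonal_eq_sum_range_succ_mk, Finset.sum_range_succ,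
      Finset.sum_range_zero, hf0, hg0, Nat.reduceSub]
    ring
  have e2 : (f.reverse * g.reverse).coeff 2 = f.reverse.coeff 2
      + f.reverse.coeff 1 * g.reverse.coeff 1 + g.reverse.coeff 2 := by
    simp only [coeff_mul, Finset.Nat.sum_antidiagonal_eq_sum_range_succ_mk, Finset.sum_range_succ,
      Finset.sum_range_zero, hf0, hg0, Nat.reduceSub]
    ring
  have e3 : (f.reverse * g.reverse).coeff 3 = f.reverse.coeff 3
      + f.reverse.coeff 2 * g.reverse.coeff 1 + f.reverse.coeff 1 * g.reverse.coeff 2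
      + g.reverse.coeff 3 := by
    simp only [coeff_mul, Finset.Nat.sum_antidiagonal_eq_sum_range_succ_mk, Finset.sum_range_succ,
      Finset.sum_range_zero, hf0, hg0, Nat.reduceSub]
    ring
  have e4 : (f.reverse * g.reverse).coeff 4 = f.reverse.coeff 4
      + f.reverse.coeff 3 * g.reverse.coeff 1 + f.reverse.coeff 2 * g.reverse.coeff 2
      + f.reverse.coeff 1 * g.reverse.coeff 3 + g.reverse.coeff 4 := by
    simp only [coeff_mul, Finset.Nat.sum_antidiagonal_eq_sum_range_succ_mk, Finset.sum_range_succ,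
      Finset.sum_range_zero, hf0, hg0, Nat.reduceSub]
    ring
  have e5 : (f.reverse * g.reverse).coeff 5 = f.reverse.coeff 5
      + f.reverse.coeff 4 * g.reverse.coeff 1 + f.reverse.coeff 3 * g.reverse.coeff 2
      + f.reverse.coeff 2 * g.reverse.coeff 3 + f.reverse.coeff 1 * g.reverse.coeff 4
      + g.reverse.coeff 5 := by
    simp only [coeff_mul, Finset.Nat.sum_antidiagonal_eq_sum_range_succ_mk, Finset.sum_range_succ,
      Finset.sum_range_zero, hf0, hg0, Nat.reduceSub]
    ring
  simp only [chi, chr, reverse_mul_of_domain, e1, e2, e3, e4, e5]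
  obtain ⟨h1, h2, h3⟩ := tab_mul (f.reverse.coeff 1) (f.reverse.coeff 2) (f.reverse.coeff 3)
    (f.reverse.coeff 4) (f.reverse.coeff 5) (g.reverse.coeff 1) (g.reverse.coeff 2)
    (g.reverse.coeff 3) (g.reverse.coeff 4) (g.reverse.coeff 5)
  rw [h1, h2, h3, hpow _ _ _ hθ, hpow _ _ _ hε, hpow _ _ _ hδ, pow_add, pow_add, pow_add]
  ring

lemma chi_step (m : ℕ) (f : (ZMod 2)[X]) (hf : f ∈ monics m) (b : ZMod 2) :
    (X * f + C b).reverse = f.reverse + C b * X ^ (m + 1) := by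
  rw [mem_monics] at hf
  rw [reverse_add_C, reverse_X_mul, monic_X.natDegree_mul hf.1, natDegree_X, hf.2, add_comm 1]

lemma sum_zmod2 (φ : ZMod 2 → ℂ) : ∑ b, φ b = φ 0 + φ 1 := Fin.sum_univ_two φ

/-- a sum over monic polynomials of degree `m ≤ 5` of a function of the reverse. -/
lemma sum_rev_succ (m : ℕ) (φ : (ZMod 2)[X] → ℂ) :
    ∑ f ∈ monics (m + 1), φ f.reverse
      = ∑ f ∈ monics m, (φ f.reverse + φ (f.reverse + X ^ (m + 1))) := by
  rw [sum_monics_succ]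
  refine Finset.sum_congr rfl fun f hf => ?_
  rw [sum_zmod2, chi_step m f hf, chi_step m f hf]
  simp

lemma sum_rev_zero (φ : (ZMod 2)[X] → ℂ) : ∑ f ∈ monics 0, φ f.reverse = φ 1 := by
  simp [monics, reverse_one']

noncomputable def chi' (θ ε δ : ℂ) (f : (ZMod 2)[X]) : ℂ :=
  chr θ ε δ (f.coeff 1) (f.coeff 2) (f.coeff 3) (f.coeff 4) (f.coeff 5)

lemma Lsum_chi (θ ε δ : ℂ) (m : ℕ) :
    Lsum (chi θ ε δ) m = ∑ f ∈ monics m, chi' θ ε δ f.reverse := rfl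

lemma Lsum_zero (θ ε δ : ℂ) : Lsum (chi θ ε δ) 0 = 1 := by
  rw [Lsum_chi, sum_rev_zero]
  simp [chi', coeff_one, chr_zero]

lemma sum_rev_one (φ : (ZMod 2)[X] → ℂ) : ∑ f ∈ monics 1, φ f.reverse = φ 1 + φ (1 + X) := by
  rw [sum_rev_succ 0, sum_rev_zero (fun f => φ f + φ (f + X ^ (0 + 1)))]
  simp

lemma sum_rev_two (φ : (ZMod 2)[X] → ℂ) : ∑ f ∈ monics 2, φ f.reverse =
    (φ 1 + φ (1 + X ^ 2)) + (φ (1 + X) + φ (1 + X + X ^ 2)) := by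
  rw [sum_rev_succ 1, sum_rev_one (fun f => φ f + φ (f + X ^ (1 + 1)))]

lemma sum_rev_three (φ : (ZMod 2)[X] → ℂ) : ∑ f ∈ monics 3, φ f.reverse =
    ((φ 1 + φ (1 + X ^ 3)) + (φ (1 + X ^ 2) + φ (1 + X ^ 2 + X ^ 3))) +
    ((φ (1 + X) + φ (1 + X + X ^ 3)) + (φ (1 + X + X ^ 2) + φ (1 + X + X ^ 2 + X ^ 3))) := by
  rw [sum_rev_succ 2, sum_rev_two (fun f => φ f + φ (f + X ^ (2 + 1)))]

lemma val_one_two : (1 : ZMod 2).val = 1 := rfl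

lemma Lsum_one (θ ε δ : ℂ) : Lsum (chi θ ε δ) 1 =
    1 + θ := by
  rw [Lsum_chi, sum_rev_one]
  simp [chi', coeff_one, coeff_X, coeff_X_pow, chr, tabA, tabB, tabC, idx, val_one_two]
  try ring

lemma Lsum_two (θ ε δ : ℂ) : Lsum (chi θ ε δ) 2 =
    1 + θ + θ ^ 2 + θ ^ 7 * ε := by
  rw [Lsum_chi, sum_rev_two]
  simp [chi', coeff_one, coeff_X, coeff_X_pow, chr, tabA, tabB, tabC, idx, val_one_two]
  try ring

lemma Lsum_three (θ ε δ : ℂ) : Lsum (chi θ ε δ) 3 =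
    1 + θ + θ ^ 2 + θ ^ 7 * ε + ε + θ ^ 5 * ε * δ + θ ^ 2 * ε * δ + θ ^ 3 := by
  rw [Lsum_chi, sum_rev_three]
  simp [chi', coeff_one, coeff_X, coeff_X_pow, chr, tabA, tabB, tabC, idx, val_one_two]
  try ring

lemma Lsum_four (θ ε δ : ℂ) : Lsum (chi θ ε δ) 4 =
    1 + θ + θ ^ 2 + θ ^ 7 * ε + ε + θ ^ 5 * ε * δ + θ ^ 2 * ε * δ + θ ^ 3 + θ ^ 4 + θ ^ 5 * δ + θ ^ 6 + θ ^ 3 * ε * δ + θ ^ 4 * ε + θ * ε + θ ^ 6 * ε * δ + θ ^ 7 * δ := by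
  rw [Lsum_chi, sum_rev_succ 3, sum_rev_three (fun f => chi' θ ε δ f + chi' θ ε δ (f + X ^ (3 + 1)))]
  simp [chi', coeff_one, coeff_X, coeff_X_pow, chr, tabA, tabB, tabC, idx, val_one_two]
  ring

lemma Lsum_five (θ ε δ : ℂ) : Lsum (chi θ ε δ) 5 =
    (1 + θ + θ ^ 2 + θ ^ 3 + θ ^ 4 + θ ^ 5 + θ ^ 6 + θ ^ 7) * (1 + ε) * (1 + δ) := by
  rw [Lsum_chi, sum_rev_succ 4, sum_rev_succ 3 (fun f => chi' θ ε δ f + chi' θ ε δ (f + X ^ (4 + 1))),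
    sum_rev_three (fun f => chi' θ ε δ f + chi' θ ε δ (f + X ^ (4 + 1)) +
      (chi' θ ε δ (f + X ^ (3 + 1)) + chi' θ ε δ (f + X ^ (3 + 1) + X ^ (4 + 1))))]
  simp [chi', coeff_one, coeff_X, coeff_X_pow, chr, tabA, tabB, tabC, idx, val_one_two]
  ring

lemma Lsum_big (θ ε δ : ℂ)
    (h : (1 + θ + θ ^ 2 + θ ^ 3 + θ ^ 4 + θ ^ 5 + θ ^ 6 + θ ^ 7) * (1 + ε) * (1 + δ) = 0)
    (m : ℕ) : Lsum (chi θ ε δ) (m + 5) = 0 := by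
  induction m with
  | zero => rw [Lsum_five, h]
  | succ m ih =>
    rw [show m + 1 + 5 = (m + 5) + 1 by ring, Lsum_chi, sum_rev_succ]
    have : ∀ f : (ZMod 2)[X], chi' θ ε δ (f + X ^ (m + 5 + 1)) = chi' θ ε δ f := by
      intro f
      have h6 : ∀ k, k ≤ 5 → (f + X ^ (m + 5 + 1)).coeff k = f.coeff k := by
        intro k hk
        rw [coeff_add, coeff_X_pow, if_neg (by omega), add_zero]
      simp only [chi', h6 1 (by omega), h6 2 (by omega), h6 3 (by omega), h6 4 (by omega),
        h6 5 (by omega)]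
    simp only [this]
    rw [Finset.sum_add_distrib, ← Lsum_chi, ih, add_zero]

/-- The (reversed) L-polynomial of a character. -/
noncomputable def Lam (θ ε δ : ℂ) : ℂ[X] :=
  X ^ 4 + C (Lsum (chi θ ε δ) 1) * X ^ 3 + C (Lsum (chi θ ε δ) 2) * X ^ 2
    + C (Lsum (chi θ ε δ) 3) * X + C (Lsum (chi θ ε δ) 4)

lemma Lam_natDegree (θ ε δ : ℂ) : (Lam θ ε δ).natDegree = 4 := by
  rw [Lam]; compute_degree!

lemma Lam_monic (θ ε δ : ℂ) : (Lam θ ε δ).Monic := by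
  rw [Lam]; monicity!

lemma Lam_coeff (θ ε δ : ℂ)
    (h : (1 + θ + θ ^ 2 + θ ^ 3 + θ ^ 4 + θ ^ 5 + θ ^ 6 + θ ^ 7) * (1 + ε) * (1 + δ) = 0)
    (m : ℕ) : (Lam θ ε δ).reverse.coeff m = Lsum (chi θ ε δ) m := by
  rw [coeff_reverse, Lam_natDegree]
  rcases le_or_gt m 4 with hm | hm
  · rw [revAt_le hm]
    interval_cases m <;> simp [Lam, coeff_X, coeff_X_pow, coeff_C, Lsum_zero]
  · obtain ⟨k, rfl⟩ : ∃ k, m = k + 5 := ⟨m - 5, by omega⟩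
    rw [revAt_eq_self_of_lt hm, Lsum_big θ ε δ h]
    apply coeff_eq_zero_of_natDegree_lt
    rw [Lam_natDegree]; exact hm

lemma Ssum_chi (θ ε δ : ℂ) (hθ : θ ^ 8 = 1) (hε : ε ^ 2 = 1) (hδ : δ ^ 2 = 1)
    (h : (1 + θ + θ ^ 2 + θ ^ 3 + θ ^ 4 + θ ^ 5 + θ ^ 6 + θ ^ 7) * (1 + ε) * (1 + δ) = 0)
    (n : ℕ) (hn : 1 ≤ n) : Ssum (chi θ ε δ) n = - rhoC n (Lam θ ε δ) := by
  refine newton_unique (Lsum (chi θ ε δ)) (Ssum (chi θ ε δ)) (fun n => - rhoC n (Lam θ ε δ))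
    (Lsum_zero θ ε δ)
    (euler_identity _ (chi_one θ ε δ) (chi_mul θ ε δ hθ hε hδ)) ?_ n hn
  intro n
  have := newton_roots (Lam θ ε δ) (Lam_monic θ ε δ) n
  simpa only [Lam_coeff θ ε δ h] using this

lemma rho_eq (n : ℕ) (γ : ℤ[X]) : rho n γ = rhoC n (γ.map (Int.castRingHom ℂ)) := rfl

lemma d21_map : d21.map (Int.castRingHom ℂ) = X ^ 2 + 2 * X + 2 := by
  simp [d21]

lemma d21_monic : (d21.map (Int.castRingHom ℂ)).Monic := by
  rw [d21_map]; monicity!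

lemma d22_map : d22.map (Int.castRingHom ℂ) = X ^ 2 + 2 := by
  simp [d22]

lemma d22_monic : (d22.map (Int.castRingHom ℂ)).Monic := by
  rw [d22_map]; monicity!

lemma d23_map : d23.map (Int.castRingHom ℂ) = X ^ 2 - 2 * X + 2 := by
  simp [d23]

lemma d23_monic : (d23.map (Int.castRingHom ℂ)).Monic := by
  rw [d23_map]; monicity!

lemma d41_map : d41.map (Int.castRingHom ℂ) = X ^ 4 + 2 * X ^ 3 + 2 * X ^ 2 + 4 * X + 4 := by
  simp [d41]

lemma d41_monic : (d41.map (Int.castRingHom ℂ)).Monic := by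
  rw [d41_map]; monicity!

lemma d42_map : d42.map (Int.castRingHom ℂ) = X ^ 4 + 2 * X ^ 2 + 4 := by
  simp [d42]

lemma d42_monic : (d42.map (Int.castRingHom ℂ)).Monic := by
  rw [d42_map]; monicity!

lemma d81_map : d81.map (Int.castRingHom ℂ) = X ^ 8 + 4 * X ^ 7 + 6 * X ^ 6 + 4 * X ^ 5 + 2 * X ^ 4 + 8 * X ^ 3 + 24 * X ^ 2 + 32 * X + 16 := by
  simp [d81]

lemma d81_monic : (d81.map (Int.castRingHom ℂ)).Monic := by
  rw [d81_map]; monicity!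

lemma d82_map : d82.map (Int.castRingHom ℂ) = X ^ 8 + 2 * X ^ 6 + 4 * X ^ 5 + 2 * X ^ 4 + 8 * X ^ 3 + 8 * X ^ 2 + 16 := by
  simp [d82]

lemma d82_monic : (d82.map (Int.castRingHom ℂ)).Monic := by
  rw [d82_map]; monicity!

lemma d83_map : d83.map (Int.castRingHom ℂ) = X ^ 8 + 2 * X ^ 7 + 2 * X ^ 6 - 4 * X ^ 4 + 8 * X ^ 2 + 16 * X + 16 := by
  simp [d83]

lemma d83_monic : (d83.map (Int.castRingHom ℂ)).Monic := by
  rw [d83_map]; monicity!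

lemma d84_map : d84.map (Int.castRingHom ℂ) = X ^ 8 + 2 * X ^ 6 - 4 * X ^ 5 + 2 * X ^ 4 - 8 * X ^ 3 + 8 * X ^ 2 + 16 := by
  simp [d84]

lemma d84_monic : (d84.map (Int.castRingHom ℂ)).Monic := by
  rw [d84_map]; monicity!

lemma Lam_odd_pp (θ : ℂ) (h : θ ^ 4 = -1) : Lam θ 1 1 =
    X ^ 4 + X ^ 3 + C θ * X ^ 3 + X ^ 2 + C θ * X ^ 2 + C θ ^ 2 * X ^ 2 - C θ ^ 3 * X ^ 2 + 2 * X + 2 * C θ ^ 2 * X := by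
  have e1 : Lsum (chi θ 1 1) 1 = 1 + θ := by
    refine (Lsum_one _ _ _).trans ?_
    linear_combination (0) * h
  have e2 : Lsum (chi θ 1 1) 2 = 1 + θ + θ ^ 2 - θ ^ 3 := by
    refine (Lsum_two _ _ _).trans ?_
    linear_combination (θ ^ 3) * h
  have e3 : Lsum (chi θ 1 1) 3 = 2 + 2 * θ ^ 2 := by
    refine (Lsum_three _ _ _).trans ?_
    linear_combination (θ + θ ^ 3) * h
  have e4 : Lsum (chi θ 1 1) 4 = 0 := by
    refine (Lsum_four _ _ _).trans ?_
    linear_combination (2 + 2 * θ + 2 * θ ^ 2 + 2 * θ ^ 3) * h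
  rw [Lam, e1, e2, e3, e4]
  simp only [C_add, C_sub, C_mul, C_pow, C_neg, C_1, C_0, map_ofNat]
  ring

lemma Lam_even_pp (θ : ℂ) (h : θ ^ 2 = -1) : Lam θ 1 1 =
    X ^ 4 + X ^ 3 + C θ * X ^ 3 := by
  have e1 : Lsum (chi θ 1 1) 1 = 1 + θ := by
    refine (Lsum_one _ _ _).trans ?_
    linear_combination (0) * h
  have e2 : Lsum (chi θ 1 1) 2 = 0 := by
    refine (Lsum_two _ _ _).trans ?_
    linear_combination (1 + θ - θ ^ 3 + θ ^ 5) * h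
  have e3 : Lsum (chi θ 1 1) 3 = 0 := by
    refine (Lsum_three _ _ _).trans ?_
    linear_combination (2 + θ + θ ^ 5) * h
  have e4 : Lsum (chi θ 1 1) 4 = 0 := by
    refine (Lsum_four _ _ _).trans ?_
    linear_combination (2 + 2 * θ + 2 * θ ^ 4 + 2 * θ ^ 5) * h
  rw [Lam, e1, e2, e3, e4]
  simp only [C_add, C_sub, C_mul, C_pow, C_neg, C_1, C_0, map_ofNat]
  ring

lemma pair_odd_pp (θ : ℂ) (h : θ ^ 4 = -1) : Lam θ 1 1 * Lam (-θ) 1 1 =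
    X ^ 8 + 2 * X ^ 7 + 3 * X ^ 6 + C (θ ^ 2) * X ^ 6 + 4 * X ^ 5 + 4 * C (θ ^ 2) * X ^ 5 + 2 * X ^ 4 + 6 * C (θ ^ 2) * X ^ 4 + 8 * C (θ ^ 2) * X ^ 3 + 8 * C (θ ^ 2) * X ^ 2 := by
  rw [Lam_odd_pp θ h, Lam_odd_pp (-θ) (by rw [← h]; ring)]
  have h' : (C θ : ℂ[X]) ^ 4 = -1 := by rw [← C_pow, h]; simp
  simp only [C_neg, C_pow]
  linear_combination (2 * X ^ 5 + 3 * X ^ 4 - C θ ^ 2 * X ^ 4 + 4 * X ^ 3 + 4 * X ^ 2) * h'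

lemma quad_pp (θ : ℂ) (h : θ ^ 4 = -1) :
    (Lam θ 1 1 * Lam (-θ) 1 1) * (Lam (θ ^ 3) 1 1 * Lam (-θ ^ 3) 1 1) =
    (d22.map (Int.castRingHom ℂ)) * (d22.map (Int.castRingHom ℂ)) * (d81.map (Int.castRingHom ℂ)) * X ^ 4 := by
  have h3 : (θ ^ 3) ^ 4 = -1 := by linear_combination (θ ^ 8 - θ ^ 4 + 1) * h
  have h6 : (θ ^ 3) ^ 2 = - θ ^ 2 := by linear_combination θ ^ 2 * h
  rw [pair_odd_pp θ h, pair_odd_pp (θ ^ 3) h3, h6]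
  have h' : (C (θ ^ 2) : ℂ[X]) ^ 2 = -1 := by rw [← C_pow, ← pow_mul, h]; simp
  generalize θ ^ 2 = i at *
  simp only [d22_map, d81_map, C_neg]
  linear_combination (-X ^ 12 - 8 * X ^ 11 - 28 * X ^ 10 - 64 * X ^ 9 - 116 * X ^ 8 - 160 * X ^ 7 - 160 * X ^ 6 - 128 * X ^ 5 - 64 * X ^ 4) * h'

lemma rq_pp (n : ℕ) (hn : 1 ≤ n) (θ : ℂ) (h : θ ^ 4 = -1) :
    rhoC n (Lam θ 1 1) + rhoC n (Lam (-θ) 1 1) + rhoC n (Lam (θ ^ 3) 1 1) + rhoC n (Lam (-θ ^ 3) 1 1) = rho n d22 + rho n d22 + rho n d81 := by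
  have h0 := congrArg (rhoC n) (quad_pp θ h)
  rw [rhoC_mul _ _ _ ((Lam_monic _ _ _).mul (Lam_monic _ _ _)) ((Lam_monic _ _ _).mul (Lam_monic _ _ _)),
    rhoC_mul _ _ _ (Lam_monic _ _ _) (Lam_monic _ _ _),
    rhoC_mul _ _ _ (Lam_monic _ _ _) (Lam_monic _ _ _),
    rhoC_mul _ _ _ ((d22_monic.mul d22_monic).mul d81_monic) (monic_X_pow _),
    rhoC_mul _ _ _ (d22_monic.mul d22_monic) d81_monic,
    rhoC_mul _ _ _ d22_monic d22_monic,
    rhoC_X_pow _ _ hn] at h0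
  simp only [rho_eq]
  linear_combination h0

lemma duo_pp (θ : ℂ) (h : θ ^ 2 = -1) : Lam θ 1 1 * Lam (-θ) 1 1 =
    (d21.map (Int.castRingHom ℂ)) * X ^ 6 := by
  rw [Lam_even_pp θ h, Lam_even_pp (-θ) (by rw [← h]; ring)]
  have h' : (C θ : ℂ[X]) ^ 2 = -1 := by rw [← C_pow, h]; simp
  simp only [d21_map, C_neg]
  linear_combination (-X ^ 6) * h'

lemma rd_pp (n : ℕ) (hn : 1 ≤ n) (θ : ℂ) (h : θ ^ 2 = -1) :
    rhoC n (Lam θ 1 1) + rhoC n (Lam (-θ) 1 1) = rho n d21 := by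
  have h0 := congrArg (rhoC n) (duo_pp θ h)
  rw [rhoC_mul _ _ _ (Lam_monic _ _ _) (Lam_monic _ _ _),
    rhoC_mul _ _ _ d21_monic (monic_X_pow _),
    rhoC_X_pow _ _ hn] at h0
  simp only [rho_eq]
  linear_combination h0

lemma rn_pp (n : ℕ) (hn : 1 ≤ n) : rhoC n (Lam (-1) 1 1) = 0 := by
  have e0 : Lam (-1) 1 1 = X ^ 4 := by
    rw [Lam, Lsum_one, Lsum_two, Lsum_three, Lsum_four]
    simp only [C_add, C_sub, C_mul, C_pow, C_neg, C_1, C_0, map_ofNat]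
    ring
  rw [e0, rhoC_X_pow _ _ hn]

lemma Lam_odd_pm (θ : ℂ) (h : θ ^ 4 = -1) : Lam θ 1 (-1) =
    X ^ 4 + X ^ 3 + C θ * X ^ 3 + X ^ 2 + C θ * X ^ 2 + C θ ^ 2 * X ^ 2 - C θ ^ 3 * X ^ 2 + 2 * X + 2 * C θ * X + 4 * C θ := by
  have e1 : Lsum (chi θ 1 (-1)) 1 = 1 + θ := by
    refine (Lsum_one _ _ _).trans ?_
    linear_combination (0) * h
  have e2 : Lsum (chi θ 1 (-1)) 2 = 1 + θ + θ ^ 2 - θ ^ 3 := by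
    refine (Lsum_two _ _ _).trans ?_
    linear_combination (θ ^ 3) * h
  have e3 : Lsum (chi θ 1 (-1)) 3 = 2 + 2 * θ := by
    refine (Lsum_three _ _ _).trans ?_
    linear_combination (-θ + θ ^ 3) * h
  have e4 : Lsum (chi θ 1 (-1)) 4 = 4 * θ := by
    refine (Lsum_four _ _ _).trans ?_
    linear_combination (2 - 2 * θ) * h
  rw [Lam, e1, e2, e3, e4]
  simp only [C_add, C_sub, C_mul, C_pow, C_neg, C_1, C_0, map_ofNat]
  ring

lemma Lam_even_pm (θ : ℂ) (h : θ ^ 2 = -1) : Lam θ 1 (-1) =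
    X ^ 4 + X ^ 3 + C θ * X ^ 3 + 2 * X - 2 * C θ * X + 4 := by
  have e1 : Lsum (chi θ 1 (-1)) 1 = 1 + θ := by
    refine (Lsum_one _ _ _).trans ?_
    linear_combination (0) * h
  have e2 : Lsum (chi θ 1 (-1)) 2 = 0 := by
    refine (Lsum_two _ _ _).trans ?_
    linear_combination (1 + θ - θ ^ 3 + θ ^ 5) * h
  have e3 : Lsum (chi θ 1 (-1)) 3 = 2 - 2 * θ := by
    refine (Lsum_three _ _ _).trans ?_
    linear_combination (3 * θ - 2 * θ ^ 3 + θ ^ 5) * h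
  have e4 : Lsum (chi θ 1 (-1)) 4 = 4 := by
    refine (Lsum_four _ _ _).trans ?_
    linear_combination (-2 + 2 * θ + 2 * θ ^ 2 - 2 * θ ^ 3) * h
  rw [Lam, e1, e2, e3, e4]
  simp only [C_add, C_sub, C_mul, C_pow, C_neg, C_1, C_0, map_ofNat]
  ring

lemma pair_odd_pm (θ : ℂ) (h : θ ^ 4 = -1) : Lam θ 1 (-1) * Lam (-θ) 1 (-1) =
    X ^ 8 + 2 * X ^ 7 + 3 * X ^ 6 + C (θ ^ 2) * X ^ 6 + 4 * X ^ 5 + 2 * X ^ 4 - 2 * C (θ ^ 2) * X ^ 4 - 8 * C (θ ^ 2) * X ^ 3 - 4 * X ^ 2 - 12 * C (θ ^ 2) * X ^ 2 - 16 * C (θ ^ 2) * X - 16 * C (θ ^ 2) := by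
  rw [Lam_odd_pm θ h, Lam_odd_pm (-θ) (by rw [← h]; ring)]
  have h' : (C θ : ℂ[X]) ^ 4 = -1 := by rw [← C_pow, h]; simp
  simp only [C_neg, C_pow]
  linear_combination (2 * X ^ 5 + 3 * X ^ 4 - C θ ^ 2 * X ^ 4 + 4 * X ^ 3 + 8 * X ^ 2) * h'

lemma quad_pm (θ : ℂ) (h : θ ^ 4 = -1) :
    (Lam θ 1 (-1) * Lam (-θ) 1 (-1)) * (Lam (θ ^ 3) 1 (-1) * Lam (-θ ^ 3) 1 (-1)) =
    (d41.map (Int.castRingHom ℂ)) * (d41.map (Int.castRingHom ℂ)) * (d84.map (Int.castRingHom ℂ)) := by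
  have h3 : (θ ^ 3) ^ 4 = -1 := by linear_combination (θ ^ 8 - θ ^ 4 + 1) * h
  have h6 : (θ ^ 3) ^ 2 = - θ ^ 2 := by linear_combination θ ^ 2 * h
  rw [pair_odd_pm θ h, pair_odd_pm (θ ^ 3) h3, h6]
  have h' : (C (θ ^ 2) : ℂ[X]) ^ 2 = -1 := by rw [← C_pow, ← pow_mul, h]; simp
  generalize θ ^ 2 = i at *
  simp only [d41_map, d84_map, C_neg]
  linear_combination (-X ^ 12 + 4 * X ^ 10 + 16 * X ^ 9 + 20 * X ^ 8 - 80 * X ^ 6 - 256 * X ^ 5 - 464 * X ^ 4 - 640 * X ^ 3 - 640 * X ^ 2 - 512 * X - 256) * h'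

lemma rq_pm (n : ℕ) (hn : 1 ≤ n) (θ : ℂ) (h : θ ^ 4 = -1) :
    rhoC n (Lam θ 1 (-1)) + rhoC n (Lam (-θ) 1 (-1)) + rhoC n (Lam (θ ^ 3) 1 (-1)) + rhoC n (Lam (-θ ^ 3) 1 (-1)) = rho n d41 + rho n d41 + rho n d84 := by
  have h0 := congrArg (rhoC n) (quad_pm θ h)
  rw [rhoC_mul _ _ _ ((Lam_monic _ _ _).mul (Lam_monic _ _ _)) ((Lam_monic _ _ _).mul (Lam_monic _ _ _)),
    rhoC_mul _ _ _ (Lam_monic _ _ _) (Lam_monic _ _ _),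
    rhoC_mul _ _ _ (Lam_monic _ _ _) (Lam_monic _ _ _),
    rhoC_mul _ _ _ (d41_monic.mul d41_monic) d84_monic,
    rhoC_mul _ _ _ d41_monic d41_monic] at h0
  simp only [rho_eq]
  linear_combination h0

lemma duo_pm (θ : ℂ) (h : θ ^ 2 = -1) : Lam θ 1 (-1) * Lam (-θ) 1 (-1) =
    (d21.map (Int.castRingHom ℂ)) * (d23.map (Int.castRingHom ℂ)) * (d41.map (Int.castRingHom ℂ)) := by
  rw [Lam_even_pm θ h, Lam_even_pm (-θ) (by rw [← h]; ring)]
  have h' : (C θ : ℂ[X]) ^ 2 = -1 := by rw [← C_pow, h]; simp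
  simp only [d21_map, d23_map, d41_map, C_neg]
  linear_combination (-X ^ 6 + 4 * X ^ 4 - 4 * X ^ 2) * h'

lemma rd_pm (n : ℕ) (hn : 1 ≤ n) (θ : ℂ) (h : θ ^ 2 = -1) :
    rhoC n (Lam θ 1 (-1)) + rhoC n (Lam (-θ) 1 (-1)) = rho n d21 + rho n d23 + rho n d41 := by
  have h0 := congrArg (rhoC n) (duo_pm θ h)
  rw [rhoC_mul _ _ _ (Lam_monic _ _ _) (Lam_monic _ _ _),
    rhoC_mul _ _ _ (d21_monic.mul d23_monic) d41_monic,
    rhoC_mul _ _ _ d21_monic d23_monic] at h0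
  simp only [rho_eq]
  linear_combination h0

lemma rn_pm (n : ℕ) (hn : 1 ≤ n) : rhoC n (Lam (-1) 1 (-1)) = rho n d21 + rho n d23 := by
  have e0 : Lam (-1) 1 (-1) = (d21.map (Int.castRingHom ℂ)) * (d23.map (Int.castRingHom ℂ)) := by
    rw [Lam, Lsum_one, Lsum_two, Lsum_three, Lsum_four]
    simp only [d21_map, d23_map, C_add, C_sub, C_mul, C_pow, C_neg, C_1, C_0, map_ofNat]
    ring
  rw [e0, rhoC_mul _ _ _ d21_monic d23_monic]
  simp only [rho_eq]

lemma rt_pm (n : ℕ) (hn : 1 ≤ n) : rhoC n (Lam 1 1 (-1)) = rho n d21 + rho n d22 := by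
  have e0 : Lam 1 1 (-1) = (d21.map (Int.castRingHom ℂ)) * (d22.map (Int.castRingHom ℂ)) := by
    rw [Lam, Lsum_one, Lsum_two, Lsum_three, Lsum_four]
    simp only [d21_map, d22_map, C_add, C_sub, C_mul, C_pow, C_neg, C_1, C_0, map_ofNat]
    ring
  rw [e0, rhoC_mul _ _ _ d21_monic d22_monic]
  simp only [rho_eq]

lemma Lam_odd_mp (θ : ℂ) (h : θ ^ 4 = -1) : Lam θ (-1) 1 =
    X ^ 4 + X ^ 3 + C θ * X ^ 3 + X ^ 2 + C θ * X ^ 2 + C θ ^ 2 * X ^ 2 + C θ ^ 3 * X ^ 2 + 2 * C θ * X + 2 * C θ ^ 3 * X := by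
  have e1 : Lsum (chi θ (-1) 1) 1 = 1 + θ := by
    refine (Lsum_one _ _ _).trans ?_
    linear_combination (0) * h
  have e2 : Lsum (chi θ (-1) 1) 2 = 1 + θ + θ ^ 2 + θ ^ 3 := by
    refine (Lsum_two _ _ _).trans ?_
    linear_combination (-θ ^ 3) * h
  have e3 : Lsum (chi θ (-1) 1) 3 = 2 * θ + 2 * θ ^ 3 := by
    refine (Lsum_three _ _ _).trans ?_
    linear_combination (-θ - θ ^ 3) * h
  have e4 : Lsum (chi θ (-1) 1) 4 = 0 := by
    refine (Lsum_four _ _ _).trans ?_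
    linear_combination (0) * h
  rw [Lam, e1, e2, e3, e4]
  simp only [C_add, C_sub, C_mul, C_pow, C_neg, C_1, C_0, map_ofNat]
  ring

lemma Lam_even_mp (θ : ℂ) (h : θ ^ 2 = -1) : Lam θ (-1) 1 =
    X ^ 4 + X ^ 3 + C θ * X ^ 3 + 2 * C θ * X ^ 2 := by
  have e1 : Lsum (chi θ (-1) 1) 1 = 1 + θ := by
    refine (Lsum_one _ _ _).trans ?_
    linear_combination (0) * h
  have e2 : Lsum (chi θ (-1) 1) 2 = 2 * θ := by
    refine (Lsum_two _ _ _).trans ?_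
    linear_combination (1 - θ + θ ^ 3 - θ ^ 5) * h
  have e3 : Lsum (chi θ (-1) 1) 3 = 0 := by
    refine (Lsum_three _ _ _).trans ?_
    linear_combination (θ - θ ^ 5) * h
  have e4 : Lsum (chi θ (-1) 1) 4 = 0 := by
    refine (Lsum_four _ _ _).trans ?_
    linear_combination (0) * h
  rw [Lam, e1, e2, e3, e4]
  simp only [C_add, C_sub, C_mul, C_pow, C_neg, C_1, C_0, map_ofNat]
  ring

lemma pair_odd_mp (θ : ℂ) (h : θ ^ 4 = -1) : Lam θ (-1) 1 * Lam (-θ) (-1) 1 =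
    X ^ 8 + 2 * X ^ 7 + 3 * X ^ 6 + C (θ ^ 2) * X ^ 6 + 4 * X ^ 5 + 6 * X ^ 4 - 2 * C (θ ^ 2) * X ^ 4 + 8 * X ^ 3 + 8 * X ^ 2 := by
  rw [Lam_odd_mp θ h, Lam_odd_mp (-θ) (by rw [← h]; ring)]
  have h' : (C θ : ℂ[X]) ^ 4 = -1 := by rw [← C_pow, h]; simp
  simp only [C_neg, C_pow]
  linear_combination (-2 * X ^ 5 - 5 * X ^ 4 - C θ ^ 2 * X ^ 4 - 8 * X ^ 3 - 4 * C θ ^ 2 * X ^ 3 - 8 * X ^ 2 - 4 * C θ ^ 2 * X ^ 2) * h'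

lemma quad_mp (θ : ℂ) (h : θ ^ 4 = -1) :
    (Lam θ (-1) 1 * Lam (-θ) (-1) 1) * (Lam (θ ^ 3) (-1) 1 * Lam (-θ ^ 3) (-1) 1) =
    (d21.map (Int.castRingHom ℂ)) * (d21.map (Int.castRingHom ℂ)) * (d82.map (Int.castRingHom ℂ)) * X ^ 4 := by
  have h3 : (θ ^ 3) ^ 4 = -1 := by linear_combination (θ ^ 8 - θ ^ 4 + 1) * h
  have h6 : (θ ^ 3) ^ 2 = - θ ^ 2 := by linear_combination θ ^ 2 * h
  rw [pair_odd_mp θ h, pair_odd_mp (θ ^ 3) h3, h6]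
  have h' : (C (θ ^ 2) : ℂ[X]) ^ 2 = -1 := by rw [← C_pow, ← pow_mul, h]; simp
  generalize θ ^ 2 = i at *
  simp only [d21_map, d82_map, C_neg]
  linear_combination (-X ^ 12 + 4 * X ^ 10 - 4 * X ^ 8) * h'

lemma rq_mp (n : ℕ) (hn : 1 ≤ n) (θ : ℂ) (h : θ ^ 4 = -1) :
    rhoC n (Lam θ (-1) 1) + rhoC n (Lam (-θ) (-1) 1) + rhoC n (Lam (θ ^ 3) (-1) 1) + rhoC n (Lam (-θ ^ 3) (-1) 1) = rho n d21 + rho n d21 + rho n d82 := by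
  have h0 := congrArg (rhoC n) (quad_mp θ h)
  rw [rhoC_mul _ _ _ ((Lam_monic _ _ _).mul (Lam_monic _ _ _)) ((Lam_monic _ _ _).mul (Lam_monic _ _ _)),
    rhoC_mul _ _ _ (Lam_monic _ _ _) (Lam_monic _ _ _),
    rhoC_mul _ _ _ (Lam_monic _ _ _) (Lam_monic _ _ _),
    rhoC_mul _ _ _ ((d21_monic.mul d21_monic).mul d82_monic) (monic_X_pow _),
    rhoC_mul _ _ _ (d21_monic.mul d21_monic) d82_monic,
    rhoC_mul _ _ _ d21_monic d21_monic,
    rhoC_X_pow _ _ hn] at h0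
  simp only [rho_eq]
  linear_combination h0

lemma duo_mp (θ : ℂ) (h : θ ^ 2 = -1) : Lam θ (-1) 1 * Lam (-θ) (-1) 1 =
    (d41.map (Int.castRingHom ℂ)) * X ^ 4 := by
  rw [Lam_even_mp θ h, Lam_even_mp (-θ) (by rw [← h]; ring)]
  have h' : (C θ : ℂ[X]) ^ 2 = -1 := by rw [← C_pow, h]; simp
  simp only [d41_map, C_neg]
  linear_combination (-X ^ 6 - 4 * X ^ 5 - 4 * X ^ 4) * h'

lemma rd_mp (n : ℕ) (hn : 1 ≤ n) (θ : ℂ) (h : θ ^ 2 = -1) :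
    rhoC n (Lam θ (-1) 1) + rhoC n (Lam (-θ) (-1) 1) = rho n d41 := by
  have h0 := congrArg (rhoC n) (duo_mp θ h)
  rw [rhoC_mul _ _ _ (Lam_monic _ _ _) (Lam_monic _ _ _),
    rhoC_mul _ _ _ d41_monic (monic_X_pow _),
    rhoC_X_pow _ _ hn] at h0
  simp only [rho_eq]
  linear_combination h0

lemma rn_mp (n : ℕ) (hn : 1 ≤ n) : rhoC n (Lam (-1) (-1) 1) = rho n d22 := by
  have e0 : Lam (-1) (-1) 1 = (d22.map (Int.castRingHom ℂ)) * X ^ 2 := by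
    rw [Lam, Lsum_one, Lsum_two, Lsum_three, Lsum_four]
    simp only [d22_map, C_add, C_sub, C_mul, C_pow, C_neg, C_1, C_0, map_ofNat]
    ring
  rw [e0, rhoC_mul _ _ _ d22_monic (monic_X_pow _), rhoC_X_pow _ _ hn]
  simp only [rho_eq]
  ring

lemma rt_mp (n : ℕ) (hn : 1 ≤ n) : rhoC n (Lam 1 (-1) 1) = rho n d21 := by
  have e0 : Lam 1 (-1) 1 = (d21.map (Int.castRingHom ℂ)) * X ^ 2 := by
    rw [Lam, Lsum_one, Lsum_two, Lsum_three, Lsum_four]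
    simp only [d21_map, C_add, C_sub, C_mul, C_pow, C_neg, C_1, C_0, map_ofNat]
    ring
  rw [e0, rhoC_mul _ _ _ d21_monic (monic_X_pow _), rhoC_X_pow _ _ hn]
  simp only [rho_eq]
  ring

lemma Lam_odd_mm (θ : ℂ) (h : θ ^ 4 = -1) : Lam θ (-1) (-1) =
    X ^ 4 + X ^ 3 + C θ * X ^ 3 + X ^ 2 + C θ * X ^ 2 + C θ ^ 2 * X ^ 2 + C θ ^ 3 * X ^ 2 + 2 * C θ ^ 2 * X + 2 * C θ ^ 3 * X + 4 * C θ ^ 3 := by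
  have e1 : Lsum (chi θ (-1) (-1)) 1 = 1 + θ := by
    refine (Lsum_one _ _ _).trans ?_
    linear_combination (0) * h
  have e2 : Lsum (chi θ (-1) (-1)) 2 = 1 + θ + θ ^ 2 + θ ^ 3 := by
    refine (Lsum_two _ _ _).trans ?_
    linear_combination (-θ ^ 3) * h
  have e3 : Lsum (chi θ (-1) (-1)) 3 = 2 * θ ^ 2 + 2 * θ ^ 3 := by
    refine (Lsum_three _ _ _).trans ?_
    linear_combination (θ - θ ^ 3) * h
  have e4 : Lsum (chi θ (-1) (-1)) 4 = 4 * θ ^ 3 := by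
    refine (Lsum_four _ _ _).trans ?_
    linear_combination (2 * θ ^ 2 - 2 * θ ^ 3) * h
  rw [Lam, e1, e2, e3, e4]
  simp only [C_add, C_sub, C_mul, C_pow, C_neg, C_1, C_0, map_ofNat]
  ring

lemma Lam_even_mm (θ : ℂ) (h : θ ^ 2 = -1) : Lam θ (-1) (-1) =
    X ^ 4 + X ^ 3 + C θ * X ^ 3 + 2 * C θ * X ^ 2 - 2 * X + 2 * C θ * X - 4 := by
  have e1 : Lsum (chi θ (-1) (-1)) 1 = 1 + θ := by
    refine (Lsum_one _ _ _).trans ?_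
    linear_combination (0) * h
  have e2 : Lsum (chi θ (-1) (-1)) 2 = 2 * θ := by
    refine (Lsum_two _ _ _).trans ?_
    linear_combination (1 - θ + θ ^ 3 - θ ^ 5) * h
  have e3 : Lsum (chi θ (-1) (-1)) 3 = -2 + 2 * θ := by
    refine (Lsum_three _ _ _).trans ?_
    linear_combination (2 - θ + 2 * θ ^ 3 - θ ^ 5) * h
  have e4 : Lsum (chi θ (-1) (-1)) 4 = -4 := by
    refine (Lsum_four _ _ _).trans ?_
    linear_combination (4 - 2 * θ ^ 2 + 2 * θ ^ 3 + 2 * θ ^ 4 - 2 * θ ^ 5) * h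
  rw [Lam, e1, e2, e3, e4]
  simp only [C_add, C_sub, C_mul, C_pow, C_neg, C_1, C_0, map_ofNat]
  ring

lemma pair_odd_mm (θ : ℂ) (h : θ ^ 4 = -1) : Lam θ (-1) (-1) * Lam (-θ) (-1) (-1) =
    X ^ 8 + 2 * X ^ 7 + 3 * X ^ 6 + C (θ ^ 2) * X ^ 6 + 4 * X ^ 5 + 4 * C (θ ^ 2) * X ^ 5 + 6 * X ^ 4 + 6 * C (θ ^ 2) * X ^ 4 + 8 * X ^ 3 + 8 * C (θ ^ 2) * X ^ 3 + 4 * X ^ 2 + 12 * C (θ ^ 2) * X ^ 2 + 16 * C (θ ^ 2) * X + 16 * C (θ ^ 2) := by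
  rw [Lam_odd_mm θ h, Lam_odd_mm (-θ) (by rw [← h]; ring)]
  have h' : (C θ : ℂ[X]) ^ 4 = -1 := by rw [← C_pow, h]; simp
  simp only [C_neg, C_pow]
  linear_combination (-2 * X ^ 5 - 5 * X ^ 4 - C θ ^ 2 * X ^ 4 - 8 * X ^ 3 - 4 * C θ ^ 2 * X ^ 3 - 4 * X ^ 2 - 12 * C θ ^ 2 * X ^ 2 - 16 * C θ ^ 2 * X - 16 * C θ ^ 2) * h'

lemma quad_mm (θ : ℂ) (h : θ ^ 4 = -1) :
    (Lam θ (-1) (-1) * Lam (-θ) (-1) (-1)) * (Lam (θ ^ 3) (-1) (-1) * Lam (-θ ^ 3) (-1) (-1)) =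
    (d42.map (Int.castRingHom ℂ)) * (d42.map (Int.castRingHom ℂ)) * (d81.map (Int.castRingHom ℂ)) := by
  have h3 : (θ ^ 3) ^ 4 = -1 := by linear_combination (θ ^ 8 - θ ^ 4 + 1) * h
  have h6 : (θ ^ 3) ^ 2 = - θ ^ 2 := by linear_combination θ ^ 2 * h
  rw [pair_odd_mm θ h, pair_odd_mm (θ ^ 3) h3, h6]
  have h' : (C (θ ^ 2) : ℂ[X]) ^ 2 = -1 := by rw [← C_pow, ← pow_mul, h]; simp
  generalize θ ^ 2 = i at *
  simp only [d42_map, d81_map, C_neg]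
  linear_combination (-X ^ 12 - 8 * X ^ 11 - 28 * X ^ 10 - 64 * X ^ 9 - 124 * X ^ 8 - 224 * X ^ 7 - 368 * X ^ 6 - 512 * X ^ 5 - 592 * X ^ 4 - 640 * X ^ 3 - 640 * X ^ 2 - 512 * X - 256) * h'

lemma rq_mm (n : ℕ) (hn : 1 ≤ n) (θ : ℂ) (h : θ ^ 4 = -1) :
    rhoC n (Lam θ (-1) (-1)) + rhoC n (Lam (-θ) (-1) (-1)) + rhoC n (Lam (θ ^ 3) (-1) (-1)) + rhoC n (Lam (-θ ^ 3) (-1) (-1)) = rho n d42 + rho n d42 + rho n d81 := by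
  have h0 := congrArg (rhoC n) (quad_mm θ h)
  rw [rhoC_mul _ _ _ ((Lam_monic _ _ _).mul (Lam_monic _ _ _)) ((Lam_monic _ _ _).mul (Lam_monic _ _ _)),
    rhoC_mul _ _ _ (Lam_monic _ _ _) (Lam_monic _ _ _),
    rhoC_mul _ _ _ (Lam_monic _ _ _) (Lam_monic _ _ _),
    rhoC_mul _ _ _ (d42_monic.mul d42_monic) d81_monic,
    rhoC_mul _ _ _ d42_monic d42_monic] at h0
  simp only [rho_eq]
  linear_combination h0

lemma duo_mm (θ : ℂ) (h : θ ^ 2 = -1) : Lam θ (-1) (-1) * Lam (-θ) (-1) (-1) =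
    (d83.map (Int.castRingHom ℂ)) := by
  rw [Lam_even_mm θ h, Lam_even_mm (-θ) (by rw [← h]; ring)]
  have h' : (C θ : ℂ[X]) ^ 2 = -1 := by rw [← C_pow, h]; simp
  simp only [d83_map, C_neg]
  linear_combination (-X ^ 6 - 4 * X ^ 5 - 8 * X ^ 4 - 8 * X ^ 3 - 4 * X ^ 2) * h'

lemma rd_mm (n : ℕ) (hn : 1 ≤ n) (θ : ℂ) (h : θ ^ 2 = -1) :
    rhoC n (Lam θ (-1) (-1)) + rhoC n (Lam (-θ) (-1) (-1)) = rho n d83 := by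
  have h0 := congrArg (rhoC n) (duo_mm θ h)
  rw [rhoC_mul _ _ _ (Lam_monic _ _ _) (Lam_monic _ _ _)] at h0
  simp only [rho_eq]
  linear_combination h0

lemma rn_mm (n : ℕ) (hn : 1 ≤ n) : rhoC n (Lam (-1) (-1) (-1)) = rho n d42 := by
  have e0 : Lam (-1) (-1) (-1) = (d42.map (Int.castRingHom ℂ)) := by
    rw [Lam, Lsum_one, Lsum_two, Lsum_three, Lsum_four]
    simp only [d42_map, C_add, C_sub, C_mul, C_pow, C_neg, C_1, C_0, map_ofNat]
    ring
  rw [e0]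
  simp only [rho_eq]

lemma rt_mm (n : ℕ) (hn : 1 ≤ n) : rhoC n (Lam 1 (-1) (-1)) = rho n d41 := by
  have e0 : Lam 1 (-1) (-1) = (d41.map (Int.castRingHom ℂ)) := by
    rw [Lam, Lsum_one, Lsum_two, Lsum_three, Lsum_four]
    simp only [d41_map, C_add, C_sub, C_mul, C_pow, C_neg, C_1, C_0, map_ofNat]
    ring
  rw [e0]
  simp only [rho_eq]


section final

/-- the sum of `φ` over the eight eighth roots of unity. -/
noncomputable def sum8 (z : ℂ) (φ : ℂ → ℂ) : ℂ :=
  φ 1 + φ (-1) + (φ (z ^ 2) + φ (-z ^ 2)) + (φ z + φ (-z) + φ (z ^ 3) + φ (-z ^ 3))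

/-- the sum of `φ` over `1, -1`. -/
noncomputable def sum2 (φ : ℂ → ℂ) : ℂ := φ 1 + φ (-1)

lemma sum8_pow (z : ℂ) (hz : z ^ 4 = -1) (s x : ℕ) (hs : s < 2) (hx : x < 8) :
    sum8 z (fun θ => θ ^ (4 * s) * θ ^ x) = if x = 4 * s then 8 else 0 := by
  have h8 : z ^ 8 = 1 := by linear_combination (z ^ 4 - 1) * hz
  have e : ∀ k r, z ^ (8 * k + r) = z ^ r := by
    intro k r; rw [pow_add, pow_mul, h8, one_pow, one_mul]
  have e4 : ∀ r, z ^ (4 + r) = - z ^ r := by intro r; rw [pow_add, hz]; ring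
  unfold sum8
  have key : ∀ y : ℕ, (1 : ℂ) ^ y + (-1) ^ y + ((z ^ 2) ^ y + (-z ^ 2) ^ y)
      + (z ^ y + (-z) ^ y + (z ^ 3) ^ y + (-z ^ 3) ^ y)
      = if y % 8 = 0 then 8 else 0 := by
    intro y
    have hy := Nat.div_add_mod y 8
    have hlt := Nat.mod_lt y (by norm_num : 8 > 0)
    generalize y % 8 = r at *
    generalize y / 8 = q at *
    subst hy
    have h1 : (-1 : ℂ) ^ (8 * q + r) = (-1) ^ r := by
      rw [pow_add, pow_mul]; norm_num
    have h2 : (z ^ 2) ^ (8 * q + r) = (z ^ 2) ^ r := by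
      rw [pow_add, pow_mul, ← pow_mul z, mul_comm 2, pow_mul, h8]; simp
    have h3 : (z ^ 3) ^ (8 * q + r) = (z ^ 3) ^ r := by
      rw [pow_add, pow_mul, ← pow_mul z, mul_comm 3, pow_mul, h8]; simp
    have hn : ∀ w : ℂ, (-w) ^ (8 * q + r) = (-1) ^ r * w ^ (8 * q + r) := by
      intro w; rw [neg_pow, h1]
    rw [hn (z ^ 2), hn z, hn (z ^ 3), h1, h2, h3, e, one_pow]
    interval_cases r
    · norm_num
    · norm_num
    · simp only [OfNat.ofNat_ne_zero, if_false]
      linear_combination (2 * z ^ 2 + 2) * hz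
    · norm_num
    · simp only [OfNat.ofNat_ne_zero, if_false]
      linear_combination (2 * (z ^ 8 - z ^ 4 + 1) + 2 * (z ^ 4 - 1) + 2) * hz
    · norm_num
    · simp only [OfNat.ofNat_ne_zero, if_false]
      linear_combination (2 * (z ^ 8 - z ^ 4 + 1) + 2 * z ^ 2 + 2 * z ^ 2 * (z ^ 12 - z ^ 8 + z ^ 4 - 1)) * hz
    · norm_num
  have k2 := key (4 * s + x)
  simp only [← pow_add]
  rw [k2]
  congr 1
  simp only [eq_iff_iff]
  omega

lemma sum2_pow (s x : ℕ) (hs : s < 2) (hx : x < 2) :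
    sum2 (fun θ => θ ^ s * θ ^ x) = if x = s then 2 else 0 := by
  unfold sum2
  interval_cases s <;> interval_cases x <;> norm_num

lemma indicator (z : ℂ) (hz : z ^ 4 = -1) (c1 c2 c3 c4 c5 s t : ZMod 2) [Decidable (c1 = 0 ∧ c2 = 0 ∧ c3 = 0 ∧ c4 = s ∧ c5 = t)] :
    sum8 z (fun θ => sum2 fun ε => sum2 fun δ =>
      (θ ^ (4 * s.val) * δ ^ t.val) * chr θ ε δ c1 c2 c3 c4 c5)
      = if (c1 = 0 ∧ c2 = 0 ∧ c3 = 0 ∧ c4 = s ∧ c5 = t) then 32 else 0 := by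
  obtain ⟨ha, hb, hc⟩ := tab_lt c1 c2 c3 c4 c5
  have h := tab_iff c1 c2 c3 c4 c5 s t
  have h1 := sum8_pow z hz s.val _ s.val_lt ha
  have h2 := sum2_pow 0 _ (by norm_num) hb
  have h3 := sum2_pow t.val _ t.val_lt hc
  simp only [h]
  unfold chr
  trans (if tabA c1 c2 c3 c4 c5 = 4 * s.val then (8 : ℂ) else 0) *
      (if tabB c1 c2 c3 c4 c5 = 0 then 2 else 0) * (if tabC c1 c2 c3 c4 c5 = t.val then 2 else 0)
  · rw [← h1, ← h2, ← h3]
    unfold sum8 sum2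
    ring
  · split_ifs <;> first | (norm_num; done) | (exfalso; tauto)

variable {K : Type} [Field K] [Fintype K]

lemma trace_iff [Algebra (ZMod 2) K] (n : ℕ) (hn : 5 ≤ n) (hK : Fintype.card K = 2 ^ n) (a : K) (k : ℕ)
    (hk : k ≤ 5) (s : ZMod 2) :
    traceFn 2 n k a = algebraMap (ZMod 2) K s ↔
      ((minpoly (ZMod 2) a ^ (n / (minpoly (ZMod 2) a).natDegree)).reverse.coeff k) = s := by
  have hd := Nat.mul_div_cancel' (minpoly_deg_dvd n hK a)
  rw [traceFn_eq n a _ hd k (by omega), (algebraMap (ZMod 2) K).injective.eq_iff]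
  have hm : (minpoly (ZMod 2) a).Monic := minpoly.monic (Algebra.IsIntegral.isIntegral a)
  have hdeg : (minpoly (ZMod 2) a ^ (n / (minpoly (ZMod 2) a).natDegree)).natDegree = n := by
    rw [hm.natDegree_pow, mul_comm, hd]
  rw [coeff_reverse, hdeg, revAt_le (by omega)]

lemma count_eq [Algebra (ZMod 2) K] (n : ℕ) (hn : 5 ≤ n) (hK : Fintype.card K = 2 ^ n) (z : ℂ) (hz : z ^ 4 = -1)
    (s t : ZMod 2) :
    32 * (cnt5 n K 0 0 0 (algebraMap (ZMod 2) K s) (algebraMap (ZMod 2) K t) : ℂ) =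
      sum8 z (fun θ => sum2 fun ε => sum2 fun δ =>
        (θ ^ (4 * s.val) * δ ^ t.val) * Ssum (chi θ ε δ) n) := by
  classical
  have hS : ∀ θ ε δ : ℂ, θ ^ 8 = 1 → ε ^ 2 = 1 → δ ^ 2 = 1 → Ssum (chi θ ε δ) n =
      ∑ a : K, chi θ ε δ (minpoly (ZMod 2) a ^ (n / (minpoly (ZMod 2) a).natDegree)) := by
    intro θ ε δ h1 h2 h3
    exact (sum_field n (by omega) hK _ (chi_one θ ε δ) (chi_mul θ ε δ h1 h2 h3)).symm
  have h8 : z ^ 8 = 1 := by linear_combination (z ^ 4 - 1) * hz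
  have h24 : z ^ 24 = 1 := by linear_combination (z ^ 16 + z ^ 8 + 1) * h8
  have h16 : z ^ 16 = 1 := by linear_combination (z ^ 8 + 1) * h8
  have hcard : (cnt5 n K 0 0 0 (algebraMap (ZMod 2) K s) (algebraMap (ZMod 2) K t) : ℂ) =
      ∑ a : K, if (((minpoly (ZMod 2) a ^ (n / (minpoly (ZMod 2) a).natDegree)).reverse.coeff 1) = 0 ∧
        ((minpoly (ZMod 2) a ^ (n / (minpoly (ZMod 2) a).natDegree)).reverse.coeff 2) = 0 ∧
        ((minpoly (ZMod 2) a ^ (n / (minpoly (ZMod 2) a).natDegree)).reverse.coeff 3) = 0 ∧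
        ((minpoly (ZMod 2) a ^ (n / (minpoly (ZMod 2) a).natDegree)).reverse.coeff 4) = s ∧
        ((minpoly (ZMod 2) a ^ (n / (minpoly (ZMod 2) a).natDegree)).reverse.coeff 5) = t)
        then (1 : ℂ) else 0 := by
    rw [cnt5, Nat.card_eq_fintype_card, Fintype.card_subtype, Finset.card_filter]
    push_cast
    refine Finset.sum_congr rfl fun a _ => ?_
    have z0 := map_zero (algebraMap (ZMod 2) K)
    simp only [← trace_iff n hn hK a 1 (by norm_num), ← trace_iff n hn hK a 2 (by norm_num),
      ← trace_iff n hn hK a 3 (by norm_num), ← trace_iff n hn hK a 4 (by norm_num),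
      ← trace_iff n hn hK a 5 (by norm_num), map_zero]
  rw [hcard, Finset.mul_sum]
  have hrhs : sum8 z (fun θ => sum2 fun ε => sum2 fun δ =>
        (θ ^ (4 * s.val) * δ ^ t.val) * Ssum (chi θ ε δ) n) =
      ∑ a : K, sum8 z (fun θ => sum2 fun ε => sum2 fun δ =>
        (θ ^ (4 * s.val) * δ ^ t.val) *
          chi θ ε δ (minpoly (ZMod 2) a ^ (n / (minpoly (ZMod 2) a).natDegree))) := by
    have h1 : ∀ w : ℂ, w ^ 8 = 1 → sum2 (fun ε => sum2 fun δ =>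
        (w ^ (4 * s.val) * δ ^ t.val) * Ssum (chi w ε δ) n) = ∑ a : K, sum2 (fun ε => sum2 fun δ =>
        (w ^ (4 * s.val) * δ ^ t.val) *
          chi w ε δ (minpoly (ZMod 2) a ^ (n / (minpoly (ZMod 2) a).natDegree))) := by
      intro w hw
      simp only [sum2]
      rw [hS w 1 1 hw (by norm_num) (by norm_num), hS w 1 (-1) hw (by norm_num) (by norm_num),
        hS w (-1) 1 hw (by norm_num) (by norm_num), hS w (-1) (-1) hw (by norm_num) (by norm_num)]
      simp only [Finset.mul_sum, Finset.sum_add_distrib]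
    simp only [sum8, Finset.sum_add_distrib]
    rw [h1 1 (by norm_num), h1 (-1) (by norm_num), h1 z h8, h1 (-z) (by rw [← h8]; ring),
      h1 (z ^ 2) (by rw [← h16]; ring), h1 (-z ^ 2) (by rw [← h16]; ring),
      h1 (z ^ 3) (by rw [← h24]; ring), h1 (-z ^ 3) (by rw [← h24]; ring)]
  rw [hrhs]
  refine Finset.sum_congr rfl fun a _ => ?_
  unfold chi
  rw [indicator z hz]
  split_ifs <;> norm_num

lemma Ssum_triv [Algebra (ZMod 2) K] (n : ℕ) (hn : 1 ≤ n) (hK : Fintype.card K = 2 ^ n) :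
    Ssum (chi 1 1 1) n = 2 ^ n := by
  rw [← sum_field n hn hK _ (chi_one 1 1 1) (chi_mul 1 1 1 (by norm_num) (by norm_num) (by norm_num))]
  simp [chi, chr, hK]

lemma count_final [Algebra (ZMod 2) K] (n : ℕ) (hn : 5 ≤ n) (hK : Fintype.card K = 2 ^ n)
    (s t : ZMod 2) :
    32 * (cnt5 n K 0 0 0 (algebraMap (ZMod 2) K s) (algebraMap (ZMod 2) K t) : ℂ) =
      2 ^ n -
      ((rho n d21) + (rho n d21)
        + (-1) ^ t.val * ((rho n d21 + rho n d22) + (rho n d21 + rho n d23)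
          + (rho n d21 + rho n d23 + rho n d41))
        + (rho n d22 + rho n d41)
        + (-1) ^ t.val * (rho n d41 + rho n d42 + rho n d83)
        + (-1) ^ s.val * ((2 * rho n d22 + rho n d81) + (-1) ^ t.val * (2 * rho n d41 + rho n d84)
          + (2 * rho n d21 + rho n d82) + (-1) ^ t.val * (2 * rho n d42 + rho n d81))) := by
  obtain ⟨z, hz⟩ := IsAlgClosed.exists_pow_nat_eq (-1 : ℂ) (n := 4) (by norm_num)
  have h1 : 1 ≤ n := by omega
  rw [count_eq n hn hK z hz]
  have h8 : z ^ 8 = 1 := by linear_combination (z ^ 4 - 1) * hz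
  have h24 : z ^ 24 = 1 := by linear_combination (z ^ 16 + z ^ 8 + 1) * h8
  have h16 : z ^ 16 = 1 := by linear_combination (z ^ 8 + 1) * h8
  have hi : (z ^ 2) ^ 2 = -1 := by rw [← hz]; ring
  have hz' : (-z) ^ 4 = -1 := by rw [← hz]; ring
  have hz3 : (z ^ 3) ^ 4 = -1 := by linear_combination (z ^ 8 - z ^ 4 + 1) * hz
  have hz3' : (-z ^ 3) ^ 4 = -1 := by linear_combination (z ^ 8 - z ^ 4 + 1) * hz
  have hi' : (-z ^ 2) ^ 2 = -1 := by rw [← hz]; ring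
  have T4 : ∀ w : ℂ, w ^ 4 = -1 → ∀ ε δ : ℂ, ε ^ 2 = 1 → δ ^ 2 = 1 →
      w ^ (4 * s.val) = (-1) ^ s.val ∧ Ssum (chi w ε δ) n = - rhoC n (Lam w ε δ) := by
    intro w hw ε δ he hd
    refine ⟨by rw [pow_mul, hw], Ssum_chi w ε δ ?_ he hd ?_ n h1⟩
    · linear_combination (w ^ 4 - 1) * hw
    · linear_combination (1 + w + w ^ 2 + w ^ 3) * (1 + ε) * (1 + δ) * hw
  have T2 : ∀ w : ℂ, w ^ 2 = -1 → ∀ ε δ : ℂ, ε ^ 2 = 1 → δ ^ 2 = 1 →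
      w ^ (4 * s.val) = 1 ∧ Ssum (chi w ε δ) n = - rhoC n (Lam w ε δ) := by
    intro w hw ε δ he hd
    have h4 : w ^ 4 = 1 := by linear_combination (w ^ 2 - 1) * hw
    refine ⟨by rw [pow_mul, h4, one_pow], Ssum_chi w ε δ ?_ he hd ?_ n h1⟩
    · linear_combination (w ^ 4 + 1) * h4
    · linear_combination (1 + w + w ^ 4 + w ^ 5) * (1 + ε) * (1 + δ) * hw
  have p1 : (1 : ℂ) ^ 2 = 1 := by norm_num
  have m1 : (-1 : ℂ) ^ 2 = 1 := by norm_num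
  have N1 : (-1 : ℂ) ^ (4 * s.val) = 1 := by rw [pow_mul]; norm_num
  have NS : ∀ ε δ : ℂ, ε ^ 2 = 1 → δ ^ 2 = 1 →
      Ssum (chi (-1) ε δ) n = - rhoC n (Lam (-1) ε δ) := by
    intro ε δ he hd
    exact Ssum_chi _ ε δ (by norm_num) he hd (by norm_num) n h1
  have S1 : Ssum (chi 1 (-1) 1) n = - rhoC n (Lam 1 (-1) 1) :=
    Ssum_chi _ _ _ (by norm_num) m1 p1 (by norm_num) n h1
  have S2 : Ssum (chi 1 1 (-1)) n = - rhoC n (Lam 1 1 (-1)) :=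
    Ssum_chi _ _ _ (by norm_num) p1 m1 (by norm_num) n h1
  have S3 : Ssum (chi 1 (-1) (-1)) n = - rhoC n (Lam 1 (-1) (-1)) :=
    Ssum_chi _ _ _ (by norm_num) m1 m1 (by norm_num) n h1
  simp only [sum8, sum2]
  rw [(T4 z hz 1 1 p1 p1).1, (T4 (-z) hz' 1 1 p1 p1).1, (T4 _ hz3 1 1 p1 p1).1,
    (T4 _ hz3' 1 1 p1 p1).1, (T2 _ hi 1 1 p1 p1).1, (T2 _ hi' 1 1 p1 p1).1, N1, one_pow, one_pow,
    (T4 z hz 1 1 p1 p1).2, (T4 (-z) hz' 1 1 p1 p1).2, (T4 _ hz3 1 1 p1 p1).2,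
    (T4 _ hz3' 1 1 p1 p1).2, (T2 _ hi 1 1 p1 p1).2, (T2 _ hi' 1 1 p1 p1).2,
    (T4 z hz 1 (-1) p1 m1).2, (T4 (-z) hz' 1 (-1) p1 m1).2, (T4 _ hz3 1 (-1) p1 m1).2,
    (T4 _ hz3' 1 (-1) p1 m1).2, (T2 _ hi 1 (-1) p1 m1).2, (T2 _ hi' 1 (-1) p1 m1).2,
    (T4 z hz (-1) 1 m1 p1).2, (T4 (-z) hz' (-1) 1 m1 p1).2, (T4 _ hz3 (-1) 1 m1 p1).2,
    (T4 _ hz3' (-1) 1 m1 p1).2, (T2 _ hi (-1) 1 m1 p1).2, (T2 _ hi' (-1) 1 m1 p1).2,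
    (T4 z hz (-1) (-1) m1 m1).2, (T4 (-z) hz' (-1) (-1) m1 m1).2, (T4 _ hz3 (-1) (-1) m1 m1).2,
    (T4 _ hz3' (-1) (-1) m1 m1).2, (T2 _ hi (-1) (-1) m1 m1).2, (T2 _ hi' (-1) (-1) m1 m1).2,
    NS 1 1 p1 p1, NS 1 (-1) p1 m1, NS (-1) 1 m1 p1, NS (-1) (-1) m1 m1, S1, S2, S3,
    Ssum_triv n h1 hK, rt_pm n h1, rt_mp n h1, rt_mm n h1,
    rn_pp n h1, rn_pm n h1, rn_mp n h1, rn_mm n h1]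
  generalize (-1 : ℂ) ^ s.val = σ
  generalize (-1 : ℂ) ^ t.val = τ
  linear_combination (-σ) * rq_pp n h1 z hz - σ * τ * rq_pm n h1 z hz - σ * rq_mp n h1 z hz
    - σ * τ * rq_mm n h1 z hz - rd_pp n h1 _ hi - τ * rd_pm n h1 _ hi - rd_mp n h1 _ hi
    - τ * rd_mm n h1 _ hi

end final

theorem statement15 (n : ℕ) (hn : 5 ≤ n)
    (K : Type) [Field K] [Fintype K] (hK : Fintype.card K = 2 ^ n) :
    ((cnt5 n K 0 0 0 0 0 : ℂ)
      = 2 ^ (n - 5) - (1 / 32) *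
          (7 * rho n d21 + 4 * rho n d22 + 2 * rho n d23 + 5 * rho n d41 + 3 * rho n d42
            + 2 * rho n d81 + rho n d82 + rho n d83 + rho n d84)) ∧
    ((cnt5 n K 0 0 0 1 0 : ℂ)
      = 2 ^ (n - 5) - (1 / 32) *
          (3 * rho n d21 + 2 * rho n d23 + rho n d41 - rho n d42
            - 2 * rho n d81 - rho n d82 + rho n d83 - rho n d84)) ∧
    ((cnt5 n K 0 0 0 0 1 : ℂ)
      = 2 ^ (n - 5) - (1 / 32) *
          (rho n d21 + 2 * rho n d22 - 2 * rho n d23 - 3 * rho n d41 - 3 * rho n d42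
            + rho n d82 - rho n d83 - rho n d84)) ∧
    ((cnt5 n K 0 0 0 1 1 : ℂ)
      = 2 ^ (n - 5) - (1 / 32) *
          (-3 * rho n d21 - 2 * rho n d22 - 2 * rho n d23 + rho n d41 + rho n d42
            - rho n d82 - rho n d83 + rho n d84)) := by
  have : Fact (Nat.Prime 2) := ⟨Nat.prime_two⟩
  have : CharP K 2 := charP_of_card_eq_prime_pow hK
  letI : Algebra (ZMod 2) K := ZMod.algebra K 2
  have hp : (2 : ℂ) ^ n = 32 * 2 ^ (n - 5) := by
    obtain ⟨m, rfl⟩ := Nat.exists_eq_add_of_le hn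
    rw [Nat.add_sub_cancel_left, pow_add]; norm_num
  have h := count_final (K := K) n hn hK
  have h00 := h 0 0
  have h10 := h 1 0
  have h01 := h 0 1
  have h11 := h 1 1
  simp only [map_zero, map_one, ZMod.val_zero, val_one_two, pow_zero, pow_one, hp] at h00 h10 h01 h11
  refine ⟨?_, ?_, ?_, ?_⟩
  · linear_combination (1 / 32) * h00
  · linear_combination (1 / 32) * h10
  · linear_combination (1 / 32) * h01
  · linear_combination (1 / 32) * h11
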